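/- arXiv:0803.3521 — 4 statements merged into one kernel-verified Lean document; each statement's English description precedes it below -/
import Mathlib

section
/- There exists a constant C > 0 such that |R_δ[h₂] − R_δ[h₁]| ≤ C·‖h₂ − h₁‖_Z for all δ ∈ (0,1] and all h₁, h₂ ∈ Z (uniform Lipschitz continuity of the functionals R_δ). Moreover, for every h ∈ Z one has R_δ[h] → R₀[h] as δ → 0⁺, where R₀[h] := ∫_{1/2}^1 ξ·a₀(ξ)·h(ξ)·exp(−∫_ξ^1 a₀(y)·b₀(y) dy) dξ. -/
/-!
The integral in `rhoF` can be evaluated up to a harmless remainder. Writing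
`D δ z = 1 + z - (λ_LSW - δ) z^(1/3)` for the denominator of `a_δ`
(`den` below), one has `b_δ = D' + 1`, so
`a_δ b_δ = (log D)' + 1 / D` and
`ρ_δ(ξ) = ξ / D δ 1 * exp (-∫_ξ^1 1 / D δ)` (`rhoF_eq`).
Hence `0 ≤ ρ_δ ≤ 1 / D 0 1` uniformly in `δ`, which gives the Lipschitz bound.

With `w = z^(1/3)` and `w₀ = (1/2)^(1/3)`, `D δ z = (w - w₀)² (w + 2 w₀) + δ w`
(`den_factor`), so `D 0` vanishes on `[0, ∞)` only at `z = 1/2`, to second order. As `δ → 0⁺`, for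
`ξ > 1/2` the integral of `1 / D δ` converges by dominated convergence, whereas for `ξ ≤ 1/2` it is
at least `1 / (4 √δ)` because of the interval `[1/2, 1/2 + √δ]`; thus `ρ_δ(ξ) → ρ₀(ξ)` for
`ξ > 1/2` and `ρ_δ(ξ) → 0` for `ξ ≤ 1/2`. Dominated convergence for `∫ ρ_δ h` concludes.
-/

open MeasureTheory Set Filter

/-- λ_LSW := 3 (1/2)^(2/3) -/
noncomputable def lamLSW : ℝ := 3 * (1/2 : ℝ) ^ ((2:ℝ)/3)

/-- a_δ(z) := 1/(1 + z − (λ_LSW − δ) z^(1/3)) -/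
noncomputable def aF (δ z : ℝ) : ℝ := 1 / (1 + z - (lamLSW - δ) * z ^ ((1:ℝ)/3))

/-- b_δ(z) := 2 − (1/3)(λ_LSW − δ) z^(−2/3) -/
noncomputable def bF (δ z : ℝ) : ℝ := 2 - (1/3) * (lamLSW - δ) * z ^ (-(2:ℝ)/3)

/-- ‖Φ‖_sup := sup_{0≤z≤1} |Φ(z)| -/
noncomputable def normSup (Φ : ℝ → ℝ) : ℝ := sSup ((fun z => |Φ z|) '' Icc (0:ℝ) 1)

/-- ‖Φ‖_tail := sup_{z≥1} |Φ(z)| e^{β₁ z} z^{β₂} -/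
noncomputable def normTail (β₁ β₂ : ℝ) (Φ : ℝ → ℝ) : ℝ :=
  sSup ((fun z => |Φ z| * Real.exp (β₁ * z) * z ^ β₂) '' Ici (1:ℝ))

/-- ‖Φ‖_Z := ‖Φ‖_sup + ‖Φ‖_tail -/
noncomputable def normZ (β₁ β₂ : ℝ) (Φ : ℝ → ℝ) : ℝ := normSup Φ + normTail β₁ β₂ Φ

/-- membership in the space Z: measurable with finite norm -/
def memZ (β₁ β₂ : ℝ) (Φ : ℝ → ℝ) : Prop :=
  Measurable Φ ∧ BddAbove ((fun z => |Φ z|) '' Icc (0:ℝ) 1) ∧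
    BddAbove ((fun z => |Φ z| * Real.exp (β₁ * z) * z ^ β₂) '' Ici (1:ℝ))

/-- (Φ₁ * Φ₂)(z) := (1/2) ∫₀^z Φ₁(z−y) Φ₂(y) dy -/
noncomputable def conv (Φ₁ Φ₂ : ℝ → ℝ) (z : ℝ) : ℝ :=
  (1/2) * ∫ y in (0:ℝ)..z, Φ₁ (z - y) * Φ₂ y

/-- unnormalized solution of the homogeneous ODE -/
noncomputable def psi0 (δ ε εt z : ℝ) : ℝ :=
  Real.exp (-∫ y in (0:ℝ)..z, aF δ y * (bF δ y - εt * y - ε))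

/-- ψ(z; ε, ε̃, δ), normalized so that ∫₀¹ z ψ dz = 1 -/
noncomputable def psi (δ ε εt z : ℝ) : ℝ :=
  psi0 δ ε εt z / ∫ t in (0:ℝ)..1, t * psi0 δ ε εt t

/-- the smooth LSW self-similar profile -/
noncomputable def PhiLSW (z : ℝ) : ℝ :=
  if z ≤ 1/2 then
    Real.exp (-∫ y in (0:ℝ)..z, aF 0 y * bF 0 y) /
      ∫ t in (0:ℝ)..(1/2 : ℝ), t * Real.exp (-∫ y in (0:ℝ)..t, aF 0 y * bF 0 y)
  else 0

/-- ρ_δ(ξ) := ξ a_δ(ξ) exp(−∫_ξ^1 a_δ b_δ) -/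
noncomputable def rhoF (δ ξ : ℝ) : ℝ :=
  ξ * aF δ ξ * Real.exp (-∫ y in ξ..(1:ℝ), aF δ y * bF δ y)

/-- R_δ[h] := ∫₀¹ ρ_δ(ξ) h(ξ) dξ -/
noncomputable def Rdel (δ : ℝ) (h : ℝ → ℝ) : ℝ := ∫ ξ in (0:ℝ)..1, rhoF δ ξ * h ξ

/-- R₀[h] := ∫_{1/2}^1 ξ a₀(ξ) h(ξ) exp(−∫_ξ^1 a₀ b₀) dξ -/
noncomputable def Rzero (h : ℝ → ℝ) : ℝ :=
  ∫ ξ in (1/2 : ℝ)..1, ξ * aF 0 ξ * h ξ * Real.exp (-∫ y in ξ..(1:ℝ), aF 0 y * bF 0 y)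

/-- γ₁(z) = z, γ₂(z) = 1 -/
noncomputable def gamF (i : ℕ) (z : ℝ) : ℝ := if i = 1 then z else 1

/-- Γ_i(ξ; ε, ε̃, δ) -/
noncomputable def Gam (i : ℕ) (δ ε εt ξ : ℝ) : ℝ :=
  ∫ z in (0:ℝ)..ξ, gamF i z * Real.exp (∫ y in z..ξ, aF δ y * (bF δ y - εt * y - ε))

/-- Γ̂_i(ξ; δ) := Γ_i(ξ; 0, 0, δ) -/
noncomputable def GamHat (i : ℕ) (δ ξ : ℝ) : ℝ := Gam i δ 0 0 ξ

/-- K_i^δ := Γ̂_i(1; δ) -/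
noncomputable def Kc (i : ℕ) (δ : ℝ) : ℝ := GamHat i δ 1

/-- Ĝ_i[h; δ] := ∫₀¹ ξ a_δ(ξ) h(ξ) Γ̂_i(ξ; δ) dξ -/
noncomputable def Ghat (i : ℕ) (δ : ℝ) (h : ℝ → ℝ) : ℝ :=
  ∫ ξ in (0:ℝ)..1, ξ * aF δ ξ * h ξ * GamHat i δ ξ

/-- G_i[h; ε, ε̃, δ] := ∫₀^∞ ξ a_δ(ξ) h(ξ) Γ_i(ξ; ε, ε̃, δ) dξ -/
noncomputable def Gfull (i : ℕ) (δ ε εt : ℝ) (h : ℝ → ℝ) : ℝ :=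
  ∫ ξ in Ioi (0:ℝ), ξ * aF δ ξ * h ξ * Gam i δ ε εt ξ

/-! ### The denominator of `a_δ` -/

/-- The denominator of `a_δ`, so that `aF δ z = 1 / den δ z` holds by definition. -/
noncomputable def den (δ z : ℝ) : ℝ := 1 + z - (lamLSW - δ) * z ^ ((1:ℝ)/3)

/-- The double root of `w ↦ 1 + w³ - λ_LSW w`. -/
noncomputable def w0 : ℝ := (1/2 : ℝ) ^ ((1:ℝ)/3)

lemma cbrt_cube {z : ℝ} (hz : 0 ≤ z) : (z ^ ((1:ℝ)/3)) ^ 3 = z := by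
  rw [← Real.rpow_natCast, ← Real.rpow_mul hz]; norm_num

lemma w0_pos : 0 < w0 := by unfold w0; positivity

lemma w0_cube : w0 ^ 3 = 1/2 := cbrt_cube (by norm_num)

lemma w0_sq_ge : 1/3 ≤ w0 ^ 2 := by
  have h1 := w0_cube
  have h2 := w0_pos
  have h3 : w0 ≤ 1 := by
    by_contra h
    push Not at h
    nlinarith [sq_nonneg w0, mul_pos h2 h2]
  nlinarith

lemma lam_eq : lamLSW = 3 * w0 ^ 2 := by
  unfold lamLSW w0
  rw [← Real.rpow_natCast ((1/2 : ℝ) ^ ((1:ℝ)/3)), ← Real.rpow_mul (by norm_num)]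
  norm_num

lemma den_factor (δ : ℝ) {z : ℝ} (hz : 0 ≤ z) :
    den δ z = (z ^ ((1:ℝ)/3) - w0) ^ 2 * (z ^ ((1:ℝ)/3) + 2 * w0) + δ * z ^ ((1:ℝ)/3) := by
  have h := cbrt_cube hz
  have h0 := w0_cube
  unfold den
  rw [lam_eq]
  linear_combination -h - 2 * h0

lemma den_pos {δ z : ℝ} (hδ : 0 < δ) (hz : 0 ≤ z) : 0 < den δ z := by
  have h0 := w0_pos
  rcases hz.eq_or_lt with rfl | hz'
  · simp [den]
  · rw [den_factor δ hz]
    have : 0 < z ^ ((1:ℝ)/3) := by positivity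
    positivity

lemma den_zero_pos {z : ℝ} (hz : 1/2 < z) : 0 < den 0 z := by
  have h0 := w0_pos
  have hz0 : 0 ≤ z := by linarith
  rw [den_factor 0 hz0]
  have h1 : w0 < z ^ ((1:ℝ)/3) := by
    unfold w0
    exact Real.rpow_lt_rpow (by norm_num) hz (by norm_num)
  have : 0 < z ^ ((1:ℝ)/3) - w0 := by linarith
  have : 0 < z ^ ((1:ℝ)/3) := by linarith
  positivity

lemma den_mono {δ δ' z : ℝ} (h : δ ≤ δ') (hz : 0 ≤ z) : den δ z ≤ den δ' z := by
  unfold den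
  have : 0 ≤ z ^ ((1:ℝ)/3) := by positivity
  nlinarith

/-- Quadratic vanishing of `den 0` at `1/2` from the right, perturbed by `δ`. -/
lemma den_le {δ z : ℝ} (hδ : 0 ≤ δ) (hz : 1/2 ≤ z) (hz1 : z ≤ 1) :
    den δ z ≤ 3 * (z - 1/2) ^ 2 + δ := by
  have hz0 : 0 ≤ z := by linarith
  have h0 := w0_pos
  have h1 : w0 ≤ z ^ ((1:ℝ)/3) := by
    unfold w0
    exact Real.rpow_le_rpow (by norm_num) hz (by norm_num)
  have h2 : z ^ ((1:ℝ)/3) ≤ 1 := Real.rpow_le_one hz0 hz1 (by norm_num)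
  have h3 := cbrt_cube hz0
  rw [den_factor δ hz0]
  set w := z ^ ((1:ℝ)/3)
  have hs := w0_sq_ge
  -- `w - w₀ = (w³ - w₀³) / (w² + w w₀ + w₀²)`, and the divisor is at least `3 w₀² ≥ 1`.
  have h4 : w - w0 ≤ z - 1/2 := by
    have e : z - 1/2 = (w - w0) * (w ^ 2 + w * w0 + w0 ^ 2) := by
      rw [← h3, ← w0_cube]; ring
    have : 1 ≤ w ^ 2 + w * w0 + w0 ^ 2 := by nlinarith
    rw [e]; nlinarith
  have h5 : (w - w0) ^ 2 ≤ (z - 1/2) ^ 2 := pow_le_pow_left₀ (by linarith) h4 2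
  have h6 : (w - w0) ^ 2 * (w + 2 * w0) ≤ (z - 1/2) ^ 2 * 3 :=
    mul_le_mul h5 (by linarith) (by linarith) (by positivity)
  nlinarith

lemma den_continuous (δ : ℝ) : Continuous (den δ) := by
  unfold den
  have : Continuous fun z : ℝ => z ^ ((1:ℝ)/3) := Real.continuous_rpow_const (by norm_num)
  fun_prop

lemma den_inv_continuousOn {δ : ℝ} {s : Set ℝ} (h : ∀ y ∈ s, 0 < den δ y) :
    ContinuousOn (fun y => 1 / den δ y) s :=
  continuousOn_const.div (den_continuous δ).continuousOn fun y hy => (h y hy).ne'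

/-! ### The weight `ρ_δ` in closed form, and its uniform bound -/

lemma den_hasDerivAt (δ : ℝ) {z : ℝ} (hz : 0 < z) : HasDerivAt (den δ) (bF δ z - 1) z := by
  have h := ((hasDerivAt_id z).const_add 1).sub
    ((Real.hasDerivAt_rpow_const (x := z) (p := (1:ℝ)/3) (Or.inl hz.ne')).const_mul (lamLSW - δ))
  refine h.congr_deriv ?_
  unfold bF
  rw [show (1:ℝ)/3 - 1 = -(2:ℝ)/3 by norm_num]
  ring

/-- Closed form of `ρ_δ`, from `a_δ b_δ = (log den)' + 1 / den`. -/
lemma rhoF_eq {δ ξ : ℝ} (hξ : 0 < ξ) (hξ1 : ξ ≤ 1) (hpos : ∀ y ∈ Icc ξ 1, 0 < den δ y) :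
    rhoF δ ξ = ξ / den δ 1 * Real.exp (-∫ y in ξ..(1:ℝ), 1 / den δ y) := by
  have hu : uIcc ξ 1 = Icc ξ 1 := uIcc_of_le hξ1
  have hc := den_inv_continuousOn hpos
  have hb : ContinuousOn (fun y => bF δ y - 1) (Icc ξ 1) := by
    unfold bF
    have : ContinuousOn (fun z : ℝ => z ^ (-(2:ℝ)/3)) (Icc ξ 1) := fun y hy =>
      (Real.continuousAt_rpow_const y _ (Or.inl (hξ.trans_le hy.1).ne')).continuousWithinAt
    fun_prop
  have hi1 : IntervalIntegrable (fun y => (bF δ y - 1) / den δ y) volume ξ 1 := by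
    apply ContinuousOn.intervalIntegrable
    rw [hu]
    exact hb.div (den_continuous δ).continuousOn fun y hy => (hpos y hy).ne'
  have hi2 : IntervalIntegrable (fun y => 1 / den δ y) volume ξ 1 := by
    apply ContinuousOn.intervalIntegrable
    rwa [hu]
  have hlog : ∫ y in ξ..(1:ℝ), (bF δ y - 1) / den δ y
      = Real.log (den δ 1) - Real.log (den δ ξ) := by
    refine intervalIntegral.integral_eq_sub_of_hasDerivAt (f := fun y => Real.log (den δ y)) ?_ hi1
    intro y hy
    rw [hu] at hy
    exact (den_hasDerivAt δ (hξ.trans_le hy.1)).log (hpos y hy).ne'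
  have hsplit : ∫ y in ξ..(1:ℝ), aF δ y * bF δ y
      = Real.log (den δ 1) - Real.log (den δ ξ) + ∫ y in ξ..(1:ℝ), 1 / den δ y := by
    rw [← hlog, ← intervalIntegral.integral_add hi1 hi2]
    congr 1
    ext y
    change 1 / den δ y * bF δ y = _
    ring
  have p1 := hpos 1 ⟨hξ1, le_rfl⟩
  have pξ := hpos ξ ⟨le_rfl, hξ1⟩
  unfold rhoF
  rw [hsplit, show ∀ a b c : ℝ, -(a - b + c) = b - a + -c by intros; ring, Real.exp_add,
    Real.exp_sub, Real.exp_log p1, Real.exp_log pξ]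
  change ξ * (1 / den δ ξ) * _ = _
  field_simp

lemma rhoF_eq_of_pos {δ ξ : ℝ} (hδ : 0 < δ) (hξ : ξ ∈ Ioc (0:ℝ) 1) :
    rhoF δ ξ = ξ / den δ 1 * Real.exp (-∫ y in ξ..(1:ℝ), 1 / den δ y) :=
  rhoF_eq hξ.1 hξ.2 fun _ hy => den_pos hδ (hξ.1.le.trans hy.1)

lemma rhoF_abs_le {δ ξ : ℝ} (hδ : 0 < δ) (hξ : ξ ∈ Ioc (0:ℝ) 1) :
    |rhoF δ ξ| ≤ 1 / den 0 1 := by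
  have p0 : 0 < den 0 1 := den_zero_pos (by norm_num)
  have p1 : 0 < den δ 1 := den_pos hδ zero_le_one
  have hm : den 0 1 ≤ den δ 1 := den_mono hδ.le zero_le_one
  have hI : 0 ≤ ∫ y in ξ..(1:ℝ), 1 / den δ y :=
    intervalIntegral.integral_nonneg hξ.2 fun y hy =>
      (one_div_pos.2 (den_pos hδ (hξ.1.le.trans hy.1))).le
  rw [rhoF_eq_of_pos hδ hξ, abs_of_nonneg (by have := hξ.1; positivity)]
  have h1 : ξ / den δ 1 ≤ 1 / den 0 1 := div_le_div₀ zero_le_one hξ.2 p0 hm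
  have h2 : Real.exp (-∫ y in ξ..(1:ℝ), 1 / den δ y) ≤ 1 := Real.exp_le_one_iff.2 (by linarith)
  calc _ ≤ 1 / den 0 1 * 1 := mul_le_mul h1 h2 (by positivity) (by positivity)
    _ = _ := mul_one _

lemma rhoF_continuousOn {δ : ℝ} (hδ : 0 < δ) : ContinuousOn (rhoF δ) (Ioc 0 1) := by
  have hc : ContinuousOn (fun y => 1 / den δ y) (uIcc 0 1) :=
    den_inv_continuousOn fun y hy => den_pos hδ (by rw [uIcc_of_le zero_le_one] at hy; exact hy.1)
  have hp : ContinuousOn (fun ξ => ∫ y in (1:ℝ)..ξ, 1 / den δ y) (Ioc 0 1) :=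
    (intervalIntegral.continuousOn_primitive_interval' hc.intervalIntegrable
      right_mem_uIcc).mono (by rw [uIcc_of_le zero_le_one]; exact Ioc_subset_Icc_self)
  have : ContinuousOn
      (fun ξ => ξ / den δ 1 * Real.exp (∫ y in (1:ℝ)..ξ, 1 / den δ y)) (Ioc 0 1) :=
    (continuousOn_id.div_const _).mul hp.rexp
  refine this.congr fun ξ hξ => ?_
  rw [rhoF_eq_of_pos hδ hξ, ← intervalIntegral.integral_symm ξ 1]

/-! ### The integrand `ρ_δ h` for `h ∈ Z` -/

lemma integrand_meas {δ : ℝ} (hδ : 0 < δ) {h : ℝ → ℝ} (hm : Measurable h) :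
    AEStronglyMeasurable (fun ξ => rhoF δ ξ * h ξ) (volume.restrict (Ioc 0 1)) :=
  ((rhoF_continuousOn hδ).aestronglyMeasurable measurableSet_Ioc).mul hm.aestronglyMeasurable

lemma abs_le_normSup {h : ℝ → ℝ} (hb : BddAbove ((fun z => |h z|) '' Icc (0:ℝ) 1)) {ξ : ℝ}
    (hξ : ξ ∈ Ioc (0:ℝ) 1) : |h ξ| ≤ normSup h :=
  le_csSup hb ⟨ξ, ⟨hξ.1.le, hξ.2⟩, rfl⟩

lemma integrand_bound {δ : ℝ} (hδ : 0 < δ) {h : ℝ → ℝ}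
    (hb : BddAbove ((fun z => |h z|) '' Icc (0:ℝ) 1)) {ξ : ℝ} (hξ : ξ ∈ Ioc (0:ℝ) 1) :
    ‖rhoF δ ξ * h ξ‖ ≤ 1 / den 0 1 * normSup h := by
  have p0 : 0 < den 0 1 := den_zero_pos (by norm_num)
  rw [Real.norm_eq_abs, abs_mul]
  exact mul_le_mul (rhoF_abs_le hδ hξ) (abs_le_normSup hb hξ) (abs_nonneg _) (by positivity)

lemma integrand_integrable {δ : ℝ} (hδ : 0 < δ) {h : ℝ → ℝ} (hm : Measurable h)
    (hb : BddAbove ((fun z => |h z|) '' Icc (0:ℝ) 1)) :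
    IntervalIntegrable (fun ξ => rhoF δ ξ * h ξ) volume 0 1 := by
  rw [intervalIntegrable_iff_integrableOn_Ioc_of_le zero_le_one]
  refine IntegrableOn.of_bound (by simp) (integrand_meas hδ hm) (1 / den 0 1 * normSup h) ?_
  filter_upwards [ae_restrict_mem measurableSet_Ioc] with ξ hξ
  exact integrand_bound hδ hb hξ

lemma normTail_nonneg (β₁ β₂ : ℝ) (h : ℝ → ℝ) : 0 ≤ normTail β₁ β₂ h := by
  apply Real.sSup_nonneg
  rintro _ ⟨z, hz, rfl⟩
  have : (0:ℝ) ≤ z := zero_le_one.trans hz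
  positivity

lemma bddAbove_sub {h₁ h₂ : ℝ → ℝ} (hb₁ : BddAbove ((fun z => |h₁ z|) '' Icc (0:ℝ) 1))
    (hb₂ : BddAbove ((fun z => |h₂ z|) '' Icc (0:ℝ) 1)) :
    BddAbove ((fun z => |h₂ z - h₁ z|) '' Icc (0:ℝ) 1) := by
  obtain ⟨M₁, hM₁⟩ := hb₁
  obtain ⟨M₂, hM₂⟩ := hb₂
  refine ⟨M₂ + M₁, ?_⟩
  rintro _ ⟨z, hz, rfl⟩
  exact (abs_sub _ _).trans (add_le_add (hM₂ ⟨z, hz, rfl⟩) (hM₁ ⟨z, hz, rfl⟩))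

/-! ### Pointwise limits of `ρ_δ` as `δ → 0⁺` -/

/-- Blow-up of `∫ 1 / den δ` across the point `1/2` as `δ → 0⁺`. -/
lemma integral_ge {s ξ : ℝ} (hs : 0 < s) (hs2 : s ≤ 1/2) (hξ : 0 < ξ) (hξ2 : ξ ≤ 1/2) :
    1 / (4 * s) ≤ ∫ y in ξ..(1:ℝ), 1 / den (s ^ 2) y := by
  have hδ : 0 < s ^ 2 := by positivity
  have hint : ∀ a b : ℝ, 0 ≤ a → a ≤ b →
      IntervalIntegrable (fun y => 1 / den (s ^ 2) y) volume a b := fun a b ha hab =>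
    (den_inv_continuousOn fun y hy => den_pos hδ
      (by rw [uIcc_of_le hab] at hy; exact ha.trans hy.1)).intervalIntegrable
  calc 1 / (4 * s) = ∫ _ in (1/2:ℝ)..(1/2 + s), 1 / (4 * s ^ 2) := by
        rw [intervalIntegral.integral_const, smul_eq_mul]; field_simp; ring
    _ ≤ ∫ y in (1/2:ℝ)..(1/2 + s), 1 / den (s ^ 2) y := by
        apply intervalIntegral.integral_mono_on (by linarith) (by simp)
          (hint _ _ (by norm_num) (by linarith))
        intro y hy
        apply one_div_le_one_div_of_le (den_pos hδ (by linarith [hy.1]))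
        have := den_le hδ.le hy.1 (by linarith [hy.2])
        nlinarith [hy.1, hy.2]
    _ ≤ ∫ y in ξ..(1:ℝ), 1 / den (s ^ 2) y := by
        apply intervalIntegral.integral_mono_interval hξ2 (by linarith) (by linarith) _
          (hint _ _ hξ.le (by linarith))
        filter_upwards [ae_restrict_mem measurableSet_Ioc] with y hy
        exact (one_div_pos.2 (den_pos hδ (hξ.trans hy.1).le)).le

lemma rhoF_tendsto_left {ξ : ℝ} (hξ : 0 < ξ) (hξ2 : ξ ≤ 1/2) :
    Tendsto (fun δ => rhoF δ ξ) (nhdsWithin 0 (Ioi 0)) (nhds 0) := by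
  have p0 : 0 < den 0 1 := den_zero_pos (by norm_num)
  have hsq : Tendsto Real.sqrt (nhdsWithin 0 (Ioi 0)) (nhdsWithin 0 (Ioi 0)) := by
    refine tendsto_nhdsWithin_iff.2 ⟨?_, ?_⟩
    · have := (Real.continuous_sqrt.tendsto 0).mono_left (nhdsWithin_le_nhds (s := Ioi 0))
      simpa using this
    · filter_upwards [self_mem_nhdsWithin] with δ hδ using Real.sqrt_pos.2 hδ
  have hlim : Tendsto (fun δ : ℝ => 1 / den 0 1 * Real.exp (-((1/4) * (Real.sqrt δ)⁻¹)))
      (nhdsWithin 0 (Ioi 0)) (nhds 0) := by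
    have h1 := (tendsto_inv_nhdsGT_zero.comp hsq).const_mul_atTop (show (0:ℝ) < 1/4 by norm_num)
    have h2 := (Real.tendsto_exp_neg_atTop_nhds_zero.comp h1).const_mul (1 / den 0 1)
    simpa using h2
  refine squeeze_zero_norm' ?_ hlim
  filter_upwards [Ioo_mem_nhdsGT (show (0:ℝ) < 1/4 by norm_num)] with δ hδ
  have hs := Real.sqrt_pos.2 hδ.1
  have hs2 : Real.sqrt δ ≤ 1/2 := by
    rw [Real.sqrt_le_left (by norm_num)]; linarith [hδ.2]
  have hge := integral_ge hs hs2 hξ hξ2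
  rw [Real.sq_sqrt hδ.1.le] at hge
  have p1 : 0 < den δ 1 := den_pos hδ.1 zero_le_one
  have hm : den 0 1 ≤ den δ 1 := den_mono hδ.1.le zero_le_one
  rw [rhoF_eq_of_pos hδ.1 ⟨hξ, by linarith⟩, Real.norm_eq_abs, abs_of_nonneg (by positivity)]
  refine mul_le_mul (div_le_div₀ zero_le_one (by linarith) p0 hm) ?_ (by positivity)
    (by positivity)
  refine Real.exp_le_exp.2 (neg_le_neg (le_trans (le_of_eq ?_) hge))
  field_simp

lemma den_tendsto (y : ℝ) :
    Tendsto (fun δ => den δ y) (nhdsWithin 0 (Ioi 0)) (nhds (den 0 y)) := by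
  have : Continuous fun δ => den δ y := by unfold den; fun_prop
  exact (this.tendsto 0).mono_left nhdsWithin_le_nhds

lemma rhoF_tendsto_right {ξ : ℝ} (hξ : 1/2 < ξ) (hξ1 : ξ ≤ 1) :
    Tendsto (fun δ => rhoF δ ξ) (nhdsWithin 0 (Ioi 0)) (nhds (rhoF 0 ξ)) := by
  have hpos : ∀ y ∈ Icc ξ 1, 0 < den 0 y := fun y hy => den_zero_pos (hξ.trans_le hy.1)
  have hξ0 : 0 < ξ := by linarith
  have hI : Tendsto (fun δ => ∫ y in ξ..(1:ℝ), 1 / den δ y) (nhdsWithin 0 (Ioi 0))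
      (nhds (∫ y in ξ..(1:ℝ), 1 / den 0 y)) := by
    apply intervalIntegral.tendsto_integral_filter_of_dominated_convergence
      (fun y => 1 / den 0 y)
    · exact Eventually.of_forall fun δ =>
        (((den_continuous δ).measurable.const_div 1)).aestronglyMeasurable
    · filter_upwards [self_mem_nhdsWithin] with δ hδ
      refine Eventually.of_forall fun y hy => ?_
      rw [uIoc_of_le hξ1] at hy
      have hy0 : 0 ≤ y := by linarith [hy.1]
      have hd : (0:ℝ) < δ := hδ
      rw [Real.norm_eq_abs, abs_of_pos (one_div_pos.2 (den_pos hd hy0))]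
      exact one_div_le_one_div_of_le (hpos y ⟨hy.1.le, hy.2⟩) (den_mono hd.le hy0)
    · apply ContinuousOn.intervalIntegrable
      rw [uIcc_of_le hξ1]
      exact den_inv_continuousOn hpos
    · refine Eventually.of_forall fun y hy => ?_
      rw [uIoc_of_le hξ1] at hy
      exact tendsto_const_nhds.div (den_tendsto y) (hpos y ⟨hy.1.le, hy.2⟩).ne'
  rw [rhoF_eq hξ0 hξ1 hpos]
  have hlim : Tendsto
      (fun δ => ξ / den δ 1 * Real.exp (-∫ y in ξ..(1:ℝ), 1 / den δ y)) (nhdsWithin 0 (Ioi 0))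
      (nhds (ξ / den 0 1 * Real.exp (-∫ y in ξ..(1:ℝ), 1 / den 0 y))) :=
    (tendsto_const_nhds.div (den_tendsto 1) (hpos 1 ⟨hξ1, le_rfl⟩).ne').mul
      ((Real.continuous_exp.tendsto _).comp hI.neg)
  refine hlim.congr' ?_
  filter_upwards [self_mem_nhdsWithin] with δ hδ
  exact (rhoF_eq_of_pos hδ ⟨hξ0, hξ1⟩).symm

/-! ### Lipschitz bound and convergence of the functionals -/

/-- `R₀` as an integral over `(0, 1]`, with the pointwise limit of `ρ_δ` as weight. -/
lemma Rzero_eq (h : ℝ → ℝ) :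
    Rzero h = ∫ ξ in (0:ℝ)..1, (Ioc (1/2:ℝ) 1).indicator (fun ξ => rhoF 0 ξ * h ξ) ξ := by
  unfold Rzero
  rw [intervalIntegral.integral_of_le (by norm_num), intervalIntegral.integral_of_le zero_le_one,
    setIntegral_indicator measurableSet_Ioc,
    inter_eq_right.2 (Ioc_subset_Ioc_left (by norm_num : (0:ℝ) ≤ 1/2))]
  congr 1
  ext ξ
  unfold rhoF
  ring

/-- uniform Lipschitz continuity of R_δ and convergence to R₀. -/
theorem stmt9 (β₁ β₂ : ℝ) (hβ₁ : 0 < β₁) (hβ₂ : 1 < β₂) :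
    (∃ C : ℝ, 0 < C ∧ ∀ δ ∈ Ioc (0:ℝ) 1, ∀ h₁ h₂ : ℝ → ℝ,
      memZ β₁ β₂ h₁ → memZ β₁ β₂ h₂ →
      |Rdel δ h₂ - Rdel δ h₁| ≤ C * normZ β₁ β₂ (fun z => h₂ z - h₁ z)) ∧
    (∀ h : ℝ → ℝ, memZ β₁ β₂ h →
      Tendsto (fun δ => Rdel δ h) (nhdsWithin 0 (Ioi 0)) (nhds (Rzero h))) := by
  have p0 : 0 < den 0 1 := den_zero_pos (by norm_num)
  refine ⟨⟨1 / den 0 1, by positivity, ?_⟩, ?_⟩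
  · rintro δ ⟨hδ, -⟩ h₁ h₂ ⟨hm₁, hb₁, -⟩ ⟨hm₂, hb₂, -⟩
    have hsub : Rdel δ h₂ - Rdel δ h₁ = ∫ ξ in (0:ℝ)..1, rhoF δ ξ * (h₂ ξ - h₁ ξ) := by
      unfold Rdel
      rw [← intervalIntegral.integral_sub (integrand_integrable hδ hm₂ hb₂)
        (integrand_integrable hδ hm₁ hb₁)]
      simp only [mul_sub]
    have hle : normSup (fun z => h₂ z - h₁ z) ≤ normZ β₁ β₂ (fun z => h₂ z - h₁ z) :=
      le_add_of_nonneg_right (normTail_nonneg _ _ _)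
    rw [hsub, ← Real.norm_eq_abs]
    have hnorm : ‖∫ ξ in (0:ℝ)..1, rhoF δ ξ * (h₂ ξ - h₁ ξ)‖
        ≤ 1 / den 0 1 * normSup (fun z => h₂ z - h₁ z) * |(1:ℝ) - 0| := by
      refine intervalIntegral.norm_integral_le_of_norm_le_const fun ξ hξ => ?_
      rw [uIoc_of_le zero_le_one] at hξ
      exact integrand_bound (h := fun z => h₂ z - h₁ z) hδ (bddAbove_sub hb₁ hb₂) hξ
    rw [sub_zero, abs_one, mul_one] at hnorm
    exact hnorm.trans (mul_le_mul_of_nonneg_left hle (by positivity))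
  · rintro h ⟨hm, hb, -⟩
    rw [Rzero_eq]
    apply intervalIntegral.tendsto_integral_filter_of_dominated_convergence
      (fun _ => 1 / den 0 1 * normSup h)
    · filter_upwards [self_mem_nhdsWithin] with δ hδ
      rw [uIoc_of_le zero_le_one]
      exact integrand_meas hδ hm
    · filter_upwards [self_mem_nhdsWithin] with δ hδ
      refine Eventually.of_forall fun ξ hξ => ?_
      rw [uIoc_of_le zero_le_one] at hξ
      exact integrand_bound hδ hb hξ
    · simp
    · refine Eventually.of_forall fun ξ hξ => ?_
      rw [uIoc_of_le zero_le_one] at hξ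
      by_cases hc : 1/2 < ξ
      · rw [indicator_of_mem (show ξ ∈ Ioc (1/2:ℝ) 1 from ⟨hc, hξ.2⟩)]
        exact (rhoF_tendsto_right hc hξ.2).mul_const _
      · rw [indicator_of_notMem fun hmem => hc hmem.1]
        simpa using (rhoF_tendsto_left hξ.1 (not_lt.1 hc)).mul_const (h ξ)
end

section
/- There exists a constant C > 0 such that for all δ ∈ (0,1], all parameter pairs (ε₁, ε̃₁), (ε₂, ε̃₂) with ε_j, ε̃_j ≥ 0, and all z ∈ [0,1]: ψ(z; ε₂, ε̃₂, δ)/ψ(z; ε₁, ε̃₁, δ) ≤ exp(C·(|ε₂ − ε₁| + |ε̃₂ − ε̃₁|)/√δ). -/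
/-!
Changing the parameters `(ε, ε̃)` changes the exponent of the unnormalized profile `psi0` by an
integral of `a_δ` against an affine function bounded on `[0,1]` by `Δ = |ε₂ - ε₁| + |ε̃₂ - ε̃₁|`.
Hence two unnormalized profiles differ by at most a factor `exp (Δ ∫₀¹ a_δ)`
(`psi0_le_exp_mul_psi0`); integrating against `z`, the same holds for the two normalization
integrals, so the normalized profiles differ by at most the square of this factor.

It remains to see `∫₀¹ a_δ ≲ δ^(-1/2)` (`integral_aF_le`). With `z = w ^ 3` and `w₀ ^ 3 = 1/2` the
choice of `lamLSW` makes the denominator of `a_δ` equal to `(w - w₀)^2 (w + 2 w₀) + δ w`: at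
`δ = 0` it has a double zero at `z = 1/2`. This gives a lower bound by a multiple of
`(z - 1/2)^2 + δ` (`denom_lower`), whose reciprocal has integral at most `π / √δ`.
-/

open MeasureTheory Set Filter

/-- The constant `200` is only a convenient choice: near `z = 0` the term `(z - 1/2)^2 / 9` has to
dominate `((z - 1/2)^2 + δ) / 200`, and for `z ≥ 1/4` the term `δ z` takes care of `δ`. -/
lemma denom_lower {δ z : ℝ} (hδ : δ ∈ Ioc (0:ℝ) 1) (hz : z ∈ Icc (0:ℝ) 1) :
    ((z - 1/2)^2 + δ) / 200 ≤ 1 + z - (lamLSW - δ) * z ^ ((1:ℝ)/3) := by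
  obtain ⟨hδ0, hδ1⟩ := hδ
  obtain ⟨hz0, hz1⟩ := hz
  obtain ⟨w, hw⟩ : ∃ w, w = z ^ ((1:ℝ)/3) := ⟨_, rfl⟩
  obtain ⟨v, hv⟩ : ∃ v, v = (1/2:ℝ) ^ ((1:ℝ)/3) := ⟨_, rfl⟩
  have hw0 : 0 ≤ w := hw ▸ Real.rpow_nonneg hz0 _
  have hv0 : 0 ≤ v := hv ▸ Real.rpow_nonneg (by norm_num) _
  have hw3 : w ^ 3 = z := by
    rw [hw, ← Real.rpow_natCast, ← Real.rpow_mul hz0]; norm_num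
  have hv3 : v ^ 3 = 1/2 := by
    rw [hv, ← Real.rpow_natCast, ← Real.rpow_mul (by norm_num)]; norm_num
  have hlam : lamLSW = 3 * v ^ 2 := by
    rw [lamLSW, hv, ← Real.rpow_natCast, ← Real.rpow_mul (by norm_num)]; norm_num
  have hw1 : w ≤ 1 := hw ▸ Real.rpow_le_one hz0 hz1 (by norm_num)
  have hv1 : v ≤ 1 := hv ▸ Real.rpow_le_one (by norm_num) (by norm_num) (by norm_num)
  have hv12 : 1/2 ≤ v := by
    by_contra! h
    have : v ^ 3 < (1/2)^3 := pow_lt_pow_left₀ h hv0 (by norm_num)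
    norm_num [hv3] at this
  have hzw : z ≤ w := by
    rw [← hw3]; exact pow_le_of_le_one hw0 hw1 (by norm_num)
  have hfac : 1 + z - (lamLSW - δ) * w = (w - v)^2 * (w + 2 * v) + δ * w := by
    rw [hlam, ← hw3]; linear_combination (-2) * hv3
  have hsq : (z - 1/2)^2 ≤ 9 * (w - v)^2 := by
    have : z - 1/2 = (w - v) * (w^2 + w*v + v^2) := by
      rw [← hw3, ← hv3]; ring
    rw [this, mul_pow, mul_comm]
    have h0 : 0 ≤ w^2 + w*v + v^2 := by positivity
    have h3 : w^2 + w*v + v^2 ≤ 3 := by nlinarith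
    exact mul_le_mul_of_nonneg_right (by nlinarith) (sq_nonneg _)
  have h1 : (w - v)^2 ≤ (w - v)^2 * (w + 2 * v) :=
    le_mul_of_one_le_right (sq_nonneg _) (by linarith)
  rw [← hw, hfac]
  have h2 : δ * z ≤ δ * w := mul_le_mul_of_nonneg_left hzw hδ0.le
  rcases le_total (1/4) z with h | h
  · nlinarith [sq_nonneg (z - 1/2)]
  · have : 1/16 ≤ (z - 1/2)^2 := by nlinarith
    nlinarith [mul_nonneg hδ0.le hz0]

lemma denom_pos {δ z : ℝ} (hδ : δ ∈ Ioc (0:ℝ) 1) (hz : z ∈ Icc (0:ℝ) 1) :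
    0 < 1 + z - (lamLSW - δ) * z ^ ((1:ℝ)/3) :=
  lt_of_lt_of_le (by have := hδ.1; positivity) (denom_lower hδ hz)

lemma aF_nonneg {δ z : ℝ} (hδ : δ ∈ Ioc (0:ℝ) 1) (hz : z ∈ Icc (0:ℝ) 1) : 0 ≤ aF δ z :=
  (one_div_pos.2 (denom_pos hδ hz)).le

lemma aF_continuousOn {δ : ℝ} (hδ : δ ∈ Ioc (0:ℝ) 1) : ContinuousOn (aF δ) (Icc 0 1) := by
  refine ContinuousOn.div continuousOn_const ?_ fun z hz => (denom_pos hδ hz).ne'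
  have : Continuous fun z : ℝ => z ^ ((1:ℝ)/3) :=
    Real.continuous_rpow_const (by norm_num)
  fun_prop

lemma aF_intervalIntegrable {δ z : ℝ} (hδ : δ ∈ Ioc (0:ℝ) 1) (hz : z ∈ Icc (0:ℝ) 1) :
    IntervalIntegrable (aF δ) volume 0 z := by
  refine ((aF_continuousOn hδ).mono ?_).intervalIntegrable
  rw [uIcc_of_le hz.1]
  exact Icc_subset_Icc_right hz.2

lemma integral_aF_le {δ : ℝ} (hδ : δ ∈ Ioc (0:ℝ) 1) :
    ∫ y in (0:ℝ)..1, aF δ y ≤ 200 * Real.pi / √δ := by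
  have hδ0 := hδ.1
  have hs : 0 < √δ := Real.sqrt_pos.2 hδ0
  have hss : √δ ^ 2 = δ := Real.sq_sqrt hδ0.le
  have hcont : Continuous fun z : ℝ => 200 / ((z - 1/2)^2 + δ) :=
    continuous_const.div (by fun_prop) fun z => by positivity
  have hderiv : ∀ z : ℝ, HasDerivAt (fun z : ℝ => 200 / √δ * Real.arctan ((z - 1/2) / √δ))
      (200 / ((z - 1/2)^2 + δ)) z := by
    intro z
    have h := ((((hasDerivAt_id z).sub_const (1/2)).div_const (√δ)).arctan).const_mul (200 / √δ)
    refine h.congr_deriv ?_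
    simp only [id]
    rw [div_pow, hss]
    have : (z - 1/2)^2 + δ ≠ 0 := by positivity
    have h' : 1 + (z - 1/2)^2 / δ ≠ 0 := by positivity
    field_simp
    rw [hss]
    ring
  calc ∫ y in (0:ℝ)..1, aF δ y ≤ ∫ y in (0:ℝ)..1, 200 / ((y - 1/2)^2 + δ) := by
        refine intervalIntegral.integral_mono_on zero_le_one
          (aF_intervalIntegrable hδ (right_mem_Icc.2 zero_le_one)) (hcont.intervalIntegrable _ _)
          fun y hy => ?_
        have := one_div_le_one_div_of_le (by positivity) (denom_lower hδ hy)
        rwa [one_div_div] at this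
    _ = 200 / √δ * Real.arctan ((1 - 1/2) / √δ) - 200 / √δ * Real.arctan ((0 - 1/2) / √δ) :=
        intervalIntegral.integral_eq_sub_of_hasDerivAt (fun z _ => hderiv z)
          (hcont.intervalIntegrable _ _)
    _ ≤ 200 / √δ * (Real.pi / 2) - 200 / √δ * (-(Real.pi / 2)) := by
        gcongr
        · exact (Real.arctan_lt_pi_div_two _).le
        · exact (Real.neg_pi_div_two_lt_arctan _).le
    _ = 200 * Real.pi / √δ := by ring

lemma exponent_intervalIntegrable {δ z : ℝ} (ε εt : ℝ) (hδ : δ ∈ Ioc (0:ℝ) 1)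
    (hz : z ∈ Icc (0:ℝ) 1) :
    IntervalIntegrable (fun y => aF δ y * (bF δ y - εt * y - ε)) volume 0 z := by
  have hb : IntervalIntegrable (fun y => bF δ y - εt * y - ε) volume 0 z := by
    have h1 : IntervalIntegrable (fun y : ℝ => y ^ (-(2:ℝ)/3)) volume 0 z :=
      intervalIntegral.intervalIntegrable_rpow' (by norm_num)
    have h2 : IntervalIntegrable (fun y : ℝ => 2 - εt * y - ε) volume 0 z :=
      Continuous.intervalIntegrable (by fun_prop) _ _
    refine (h2.sub (h1.const_mul ((1/3) * (lamLSW - δ)))).congr fun y _ => ?_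
    simp only [bF]; ring
  refine hb.continuousOn_mul ((aF_continuousOn hδ).mono ?_)
  rw [uIcc_of_le hz.1]
  exact Icc_subset_Icc_right hz.2

lemma psi0_le_exp_mul_psi0 {δ z : ℝ} (ε₁ εt₁ ε₂ εt₂ : ℝ) (hδ : δ ∈ Ioc (0:ℝ) 1)
    (hz : z ∈ Icc (0:ℝ) 1) :
    psi0 δ ε₂ εt₂ z ≤
      Real.exp ((|ε₂ - ε₁| + |εt₂ - εt₁|) * ∫ y in (0:ℝ)..1, aF δ y) * psi0 δ ε₁ εt₁ z := by
  rw [psi0, psi0, ← Real.exp_add, Real.exp_le_exp]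
  have hone : (1:ℝ) ∈ Icc (0:ℝ) 1 := right_mem_Icc.2 zero_le_one
  have hia := aF_intervalIntegrable hδ hz
  have hi₁ := exponent_intervalIntegrable ε₁ εt₁ hδ hz
  have hi₂ := exponent_intervalIntegrable ε₂ εt₂ hδ hz
  set Δ := |ε₂ - ε₁| + |εt₂ - εt₁| with hΔ
  have key := intervalIntegral.integral_mono_on (μ := volume) hz.1 hi₁
    (hi₂.add (hia.const_mul Δ)) fun y hy => by
      have hy' : y ∈ Icc (0:ℝ) 1 := ⟨hy.1, hy.2.trans hz.2⟩
      have hΔy : (ε₂ - ε₁) + (εt₂ - εt₁) * y ≤ Δ := by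
        have h1 := le_abs_self (ε₂ - ε₁)
        have h2 : (εt₂ - εt₁) * y ≤ |εt₂ - εt₁| * y :=
          mul_le_mul_of_nonneg_right (le_abs_self _) hy'.1
        have h3 := mul_le_of_le_one_right (abs_nonneg (εt₂ - εt₁)) hy'.2
        linarith
      have := mul_le_mul_of_nonneg_left hΔy (aF_nonneg hδ hy')
      linarith
  rw [intervalIntegral.integral_add hi₂ (hia.const_mul Δ),
    intervalIntegral.integral_const_mul] at key
  have hmono : ∫ y in (0:ℝ)..z, aF δ y ≤ ∫ y in (0:ℝ)..1, aF δ y := by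
    refine intervalIntegral.integral_mono_interval le_rfl hz.1 hz.2 ?_
      (aF_intervalIntegrable hδ hone)
    filter_upwards [ae_restrict_mem measurableSet_Ioc] with y hy
    exact aF_nonneg hδ (Ioc_subset_Icc_self hy)
  have := mul_le_mul_of_nonneg_left hmono (show 0 ≤ Δ by positivity)
  linarith

lemma mul_psi0_intervalIntegrable {δ : ℝ} (ε εt : ℝ) (hδ : δ ∈ Ioc (0:ℝ) 1) :
    IntervalIntegrable (fun t => t * psi0 δ ε εt t) volume 0 1 := by
  have h := exponent_intervalIntegrable ε εt hδ (right_mem_Icc.2 zero_le_one)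
  have hc := intervalIntegral.continuousOn_primitive_interval' h left_mem_uIcc
  exact (continuousOn_id.mul hc.neg.rexp).intervalIntegrable

/-- comparison of ψ for different parameter pairs. -/
theorem stmt10 :
    ∃ C : ℝ, 0 < C ∧ ∀ δ ∈ Ioc (0:ℝ) 1,
      ∀ ε₁ εt₁ ε₂ εt₂ : ℝ, 0 ≤ ε₁ → 0 ≤ εt₁ → 0 ≤ ε₂ → 0 ≤ εt₂ →
        ∀ z ∈ Icc (0:ℝ) 1,
          psi δ ε₂ εt₂ z / psi δ ε₁ εt₁ z ≤
            Real.exp (C * (|ε₂ - ε₁| + |εt₂ - εt₁|) / Real.sqrt δ) := by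
  refine ⟨400 * Real.pi, by positivity, ?_⟩
  intro δ hδ ε₁ εt₁ ε₂ εt₂ _ _ _ _ z hz
  have hs : 0 < √δ := Real.sqrt_pos.2 hδ.1
  set Δ := |ε₂ - ε₁| + |εt₂ - εt₁| with hΔ
  set E := Real.exp (Δ * ∫ y in (0:ℝ)..1, aF δ y) with hE
  have hpos : ∀ ε εt t, 0 < psi0 δ ε εt t := fun _ _ _ => Real.exp_pos _
  have h₁ : psi0 δ ε₂ εt₂ z / psi0 δ ε₁ εt₁ z ≤ E :=
    (div_le_iff₀ (hpos _ _ _)).2 (psi0_le_exp_mul_psi0 ε₁ εt₁ ε₂ εt₂ hδ hz)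
  have hN₀ : ∀ ε εt, 0 ≤ ∫ t in (0:ℝ)..1, t * psi0 δ ε εt t := fun ε εt =>
    intervalIntegral.integral_nonneg zero_le_one fun t ht => mul_nonneg ht.1 (hpos _ _ _).le
  have hN : (∫ t in (0:ℝ)..1, t * psi0 δ ε₁ εt₁ t) ≤
      E * ∫ t in (0:ℝ)..1, t * psi0 δ ε₂ εt₂ t := by
    rw [← intervalIntegral.integral_const_mul]
    refine intervalIntegral.integral_mono_on zero_le_one (mul_psi0_intervalIntegrable _ _ hδ)
      ((mul_psi0_intervalIntegrable _ _ hδ).const_mul _) fun t ht => ?_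
    have h := psi0_le_exp_mul_psi0 ε₂ εt₂ ε₁ εt₁ hδ ht
    rw [abs_sub_comm ε₁, abs_sub_comm εt₁] at h
    rw [mul_left_comm]
    exact mul_le_mul_of_nonneg_left h ht.1
  have h₂ : (∫ t in (0:ℝ)..1, t * psi0 δ ε₁ εt₁ t) / (∫ t in (0:ℝ)..1, t * psi0 δ ε₂ εt₂ t) ≤ E :=
    div_le_of_le_mul₀ (hN₀ _ _) (Real.exp_pos _).le hN
  calc psi δ ε₂ εt₂ z / psi δ ε₁ εt₁ z
      = psi0 δ ε₂ εt₂ z / psi0 δ ε₁ εt₁ z *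
        ((∫ t in (0:ℝ)..1, t * psi0 δ ε₁ εt₁ t) / (∫ t in (0:ℝ)..1, t * psi0 δ ε₂ εt₂ t)) := by
        rw [psi, psi, div_div_div_eq, div_mul_div_comm,
          mul_comm (∫ t in (0:ℝ)..1, t * psi0 δ ε₂ εt₂ t)]
    _ ≤ E * E := mul_le_mul h₁ h₂ (div_nonneg (hN₀ _ _) (hN₀ _ _)) (Real.exp_pos _).le
    _ ≤ Real.exp (400 * Real.pi * Δ / √δ) := by
        rw [hE, ← Real.exp_add, Real.exp_le_exp]
        have := mul_le_mul_of_nonneg_left (integral_aF_le hδ) (show 0 ≤ Δ by positivity)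
        calc _ ≤ Δ * (200 * Real.pi / √δ) + Δ * (200 * Real.pi / √δ) := add_le_add this this
          _ = _ := by ring
end

section
/- There exist constants c > 0 and C > 0 such that for all δ ∈ (0,1] and i ∈ {1,2}: c·exp(c/√δ) ≤ K_i^δ ≤ C·exp(C/√δ), and moreover c·K₂^δ ≤ K₁^δ ≤ K₂^δ. -/
/-!
Write `p_δ = 1 / a_δ` and `E(z) = exp(∫_z^1 1/p_δ)`. Since `b_δ = 1 + p_δ'`, the exponential in
`Γ̂_i(1; δ)` equals `p_δ(1) E(z) / p_δ(z)` (`exp_integral_eq`), and `E' = -E / p_δ`. Hence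
`K₂ = p_δ(1) (E(0) - 1)` exactly (`Kc_two`), while restricting the integral for `K₁` to `[1/4, 1]`
gives `K₁ ≥ p_δ(1) (E(1/4) - 1) / 4` (`le_Kc_one`). On `[0, 1/4]` the function `p_δ` is bounded
below uniformly in `δ`, so `E(0)` and `E(1/4)` are comparable (`EF_zero_le`).

It remains to see that `log E(0)`, `log E(1/4)` are of order `1/√δ`. With `w = z^{1/3}` and `s = 2^{-1/3}`,
`p_δ(z) = (w - s)² (w + 2s) + δ w` (`pF_decomp`), which on `[0, 1]` is comparable to
`(z - 1/2)² + δ`; the integral of its inverse is then bounded above by an arctangent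
(`EF_zero_le_exp`) and below by the contribution of a window of width `√δ / 2` around `1/2`
(`le_EF_quarter`).
-/

open MeasureTheory Set Filter

/-! ### The denominator of `a_δ` -/

/-- The denominator `p_δ(z) = 1 + z − (λ_LSW − δ) z^{1/3}`, so that `a_δ = 1 / p_δ`. -/
noncomputable def pF (δ z : ℝ) : ℝ := 1 + z - (lamLSW - δ) * z ^ ((1:ℝ)/3)

/-- `a_δ` extended to negative arguments by its value at `0`: a continuous positive function on
the whole line that agrees with `a_δ` on `[0, ∞)`. -/
noncomputable def gF (δ z : ℝ) : ℝ := 1 / pF δ (max 0 z)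

/-- `E_δ(z) = exp(∫_z^1 a_δ)`. -/
noncomputable def EF (δ z : ℝ) : ℝ := Real.exp (∫ y in z..(1:ℝ), gF δ y)

/-- In the variable `w = z^{1/3}` with `s = 2^{-1/3}`, the critical cubic `1 + w³ − 3s²w` has the
double root `s`, because `2s³ = 1`. -/
lemma pF_decomp (δ : ℝ) {z : ℝ} (hz : 0 ≤ z) :
    ∃ w s : ℝ, 0 ≤ w ∧ w ^ 3 = z ∧ 1 / 2 ≤ s ∧ s ≤ 1 ∧ s ^ 3 = 1 / 2 ∧
      pF δ z = (w - s) ^ 2 * (w + 2 * s) + δ * w := by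
  have hs3 : ((1/2 : ℝ) ^ ((1:ℝ)/3)) ^ 3 = 1 / 2 := by
    rw [← Real.rpow_natCast, ← Real.rpow_mul (by norm_num)]; norm_num
  have hs0 : 0 ≤ (1/2 : ℝ) ^ ((1:ℝ)/3) := by positivity
  have hw3 : (z ^ ((1:ℝ)/3)) ^ 3 = z := by
    rw [← Real.rpow_natCast, ← Real.rpow_mul hz]; norm_num
  have hlam : lamLSW = 3 * ((1/2 : ℝ) ^ ((1:ℝ)/3)) ^ 2 := by
    unfold lamLSW
    rw [← Real.rpow_natCast, ← Real.rpow_mul (by norm_num)]; norm_num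
  have hw0 : 0 ≤ z ^ ((1:ℝ)/3) := by positivity
  unfold pF
  rw [hlam]
  generalize (1/2 : ℝ) ^ ((1:ℝ)/3) = s at *
  generalize z ^ ((1:ℝ)/3) = w at *
  refine ⟨w, s, hw0, hw3, ?_, ?_, hs3, ?_⟩
  · by_contra! h
    have := pow_lt_pow_left₀ h hs0 (n := 3) (by norm_num)
    norm_num [hs3] at this
  · by_contra! h
    have := one_lt_pow₀ h (n := 3) (by norm_num)
    norm_num [hs3] at this
  · rw [← hw3]
    linear_combination (-2) * hs3

lemma pF_pos {δ : ℝ} (hδ : 0 < δ) {z : ℝ} (hz : 0 ≤ z) : 0 < pF δ z := by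
  obtain ⟨w, s, hw, hwz, hs, hs1, hs3, h⟩ := pF_decomp δ hz
  rw [h]
  rcases hw.eq_or_lt with h0 | h0
  · rw [← h0]
    have : 0 < s := by linarith
    have : (0 - s) ^ 2 * (0 + 2 * s) + δ * 0 = 2 * s ^ 3 := by ring
    rw [this]; positivity
  · have : 0 < δ * w := by positivity
    have : 0 ≤ (w - s) ^ 2 * (w + 2 * s) := by
      apply mul_nonneg (sq_nonneg _); linarith
    linarith

lemma pF_lower {δ : ℝ} (hδ : 0 < δ) {z : ℝ} (hz : 0 ≤ z) (hz1 : z ≤ 1) :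
    (z - 1 / 2) ^ 2 / 9 + δ * z ≤ pF δ z := by
  obtain ⟨w, s, hw, hwz, hs, hs1, hs3, h⟩ := pF_decomp δ hz
  have hw1 : w ≤ 1 := by
    by_contra! h
    have := one_lt_pow₀ h (n := 3) (by norm_num)
    linarith
  have hzw : z ≤ w := by
    rw [← hwz]; exact pow_le_of_le_one hw hw1 (by norm_num)
  have e : z - 1 / 2 = (w - s) * (w ^ 2 + w * s + s ^ 2) := by
    rw [← hwz, ← hs3]; ring
  have hq : w ^ 2 + w * s + s ^ 2 ≤ 3 := by nlinarith
  have hq0 : 0 ≤ w ^ 2 + w * s + s ^ 2 := by positivity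
  have hq2 : (w ^ 2 + w * s + s ^ 2) ^ 2 ≤ 9 := by nlinarith
  have h1 : (z - 1 / 2) ^ 2 ≤ (w - s) ^ 2 * 9 := by
    rw [e, mul_pow]; exact mul_le_mul_of_nonneg_left hq2 (sq_nonneg _)
  have h2 : (w - s) ^ 2 * 1 ≤ (w - s) ^ 2 * (w + 2 * s) :=
    mul_le_mul_of_nonneg_left (by linarith) (sq_nonneg _)
  have h3 : δ * z ≤ δ * w := mul_le_mul_of_nonneg_left hzw hδ.le
  rw [h]; linarith

lemma pF_upper {δ : ℝ} (hδ : 0 < δ) {z : ℝ} (hz : 0 ≤ z) (hz1 : z ≤ 1) :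
    pF δ z ≤ 48 * (z - 1 / 2) ^ 2 + δ := by
  obtain ⟨w, s, hw, hwz, hs, hs1, hs3, h⟩ := pF_decomp δ hz
  have hw1 : w ≤ 1 := by
    by_contra! h
    have := one_lt_pow₀ h (n := 3) (by norm_num)
    linarith
  have e : z - 1 / 2 = (w - s) * (w ^ 2 + w * s + s ^ 2) := by
    rw [← hwz, ← hs3]; ring
  have hq : 1 / 4 ≤ w ^ 2 + w * s + s ^ 2 := by nlinarith [mul_nonneg hw (by linarith : 0 ≤ s)]
  have hq2 : 1 / 16 ≤ (w ^ 2 + w * s + s ^ 2) ^ 2 := by nlinarith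
  have h1 : (w - s) ^ 2 * (1 / 16) ≤ (z - 1 / 2) ^ 2 := by
    rw [e, mul_pow]; exact mul_le_mul_of_nonneg_left hq2 (sq_nonneg _)
  have h2 : (w - s) ^ 2 * (w + 2 * s) ≤ (w - s) ^ 2 * 3 :=
    mul_le_mul_of_nonneg_left (by linarith) (sq_nonneg _)
  have h3 : δ * w ≤ δ := by nlinarith
  rw [h]; linarith

lemma pF_continuous (δ : ℝ) : Continuous (pF δ) := by
  unfold pF
  have : Continuous fun z : ℝ => z ^ ((1:ℝ)/3) :=
    Real.continuous_rpow_const (by norm_num)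
  fun_prop

/-! ### The primitive of `a_δ` and its exponential -/

lemma gF_continuous {δ : ℝ} (hδ : 0 < δ) : Continuous (gF δ) := by
  unfold gF
  refine Continuous.div continuous_const
    ((pF_continuous δ).comp (continuous_const.max continuous_id)) fun z => ?_
  exact (pF_pos hδ (le_max_left _ _)).ne'

lemma gF_pos {δ : ℝ} (hδ : 0 < δ) (z : ℝ) : 0 < gF δ z :=
  one_div_pos.2 (pF_pos hδ (le_max_left _ _))

lemma gF_eq (δ : ℝ) {z : ℝ} (hz : 0 ≤ z) : gF δ z = 1 / pF δ z := by
  rw [gF, max_eq_right hz]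

lemma EF_pos (δ z : ℝ) : 0 < EF δ z := Real.exp_pos _

lemma EF_hasDerivAt {δ : ℝ} (hδ : 0 < δ) (z : ℝ) :
    HasDerivAt (EF δ) (-(gF δ z * EF δ z)) z := by
  have hc := gF_continuous hδ
  have h : HasDerivAt (fun u => ∫ y in u..(1:ℝ), gF δ y) (-gF δ z) z :=
    intervalIntegral.integral_hasDerivAt_left (hc.intervalIntegrable _ _)
      (hc.stronglyMeasurableAtFilter _ _) hc.continuousAt
  exact h.exp.congr_deriv (by simp only [EF]; ring)

lemma EF_continuous {δ : ℝ} (hδ : 0 < δ) : Continuous (EF δ) :=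
  continuous_iff_continuousAt.2 fun z => (EF_hasDerivAt hδ z).continuousAt

lemma integral_gF_EF {δ : ℝ} (hδ : 0 < δ) (a : ℝ) :
    ∫ z in a..(1:ℝ), gF δ z * EF δ z = EF δ a - 1 := by
  have h := intervalIntegral.integral_eq_sub_of_hasDerivAt (a := a) (b := 1)
    (fun z _ => EF_hasDerivAt hδ z)
    (((gF_continuous hδ).mul (EF_continuous hδ)).neg.intervalIntegrable _ _)
  rw [intervalIntegral.integral_neg] at h
  have h1 : EF δ 1 = 1 := by simp [EF]
  linarith

/-! ### Formulas for `K₁` and `K₂` -/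

lemma pF_hasDerivAt (δ : ℝ) {z : ℝ} (hz : 0 < z) : HasDerivAt (pF δ) (bF δ z - 1) z := by
  have h := Real.hasDerivAt_rpow_const (x := z) (p := (1:ℝ)/3) (Or.inl hz.ne')
  have h2 := ((hasDerivAt_id z).const_add 1).sub (h.const_mul (lamLSW - δ))
  refine HasDerivAt.congr_deriv (f := pF δ) h2 ?_
  unfold bF
  norm_num
  ring

/-- Since `b_δ = 1 + p_δ'`, the integrand `a_δ b_δ` is `1 / p_δ + (log p_δ)'`. -/
lemma exp_integral_eq {δ : ℝ} (hδ : 0 < δ) {z : ℝ} (hz : 0 < z) (hz1 : z ≤ 1) :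
    Real.exp (∫ y in z..(1:ℝ), aF δ y * (bF δ y - 0 * y - 0)) =
      pF δ 1 * (gF δ z * EF δ z) := by
  have hsub : ∀ y ∈ uIcc z 1, 0 < y := fun y hy => by
    rw [uIcc_of_le hz1] at hy; exact hz.trans_le hy.1
  have hcb : ContinuousOn (bF δ) (uIcc z 1) := by
    unfold bF
    have : ContinuousOn (fun y : ℝ => y ^ (-(2:ℝ)/3)) (uIcc z 1) := fun y hy =>
      (Real.continuousAt_rpow_const _ _ (Or.inl (hsub y hy).ne')).continuousWithinAt
    fun_prop
  have hci : ContinuousOn (fun y => (bF δ y - 1) / pF δ y) (uIcc z 1) :=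
    (hcb.sub continuousOn_const).div (pF_continuous δ).continuousOn
      fun y hy => (pF_pos hδ (hsub y hy).le).ne'
  have hlog : ∫ y in z..(1:ℝ), (bF δ y - 1) / pF δ y
      = Real.log (pF δ 1) - Real.log (pF δ z) :=
    intervalIntegral.integral_eq_sub_of_hasDerivAt (f := fun y => Real.log (pF δ y))
      (fun y hy => (pF_hasDerivAt δ (hsub y hy)).log (pF_pos hδ (hsub y hy).le).ne')
      hci.intervalIntegrable
  have hsplit : ∫ y in z..(1:ℝ), aF δ y * (bF δ y - 0 * y - 0)
      = (∫ y in z..(1:ℝ), gF δ y) + ∫ y in z..(1:ℝ), (bF δ y - 1) / pF δ y := by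
    rw [← intervalIntegral.integral_add ((gF_continuous hδ).intervalIntegrable _ _)
      hci.intervalIntegrable]
    refine intervalIntegral.integral_congr fun y hy => ?_
    have ha : aF δ y = 1 / pF δ y := rfl
    simp only [ha, gF_eq δ (hsub y hy).le]
    ring
  rw [hsplit, hlog, Real.exp_add, Real.exp_sub, Real.exp_log (pF_pos hδ zero_le_one),
    Real.exp_log (pF_pos hδ hz.le), gF_eq δ hz.le, EF]
  ring

lemma Kc_eq {δ : ℝ} (hδ : 0 < δ) (i : ℕ) :
    Kc i δ = pF δ 1 * ∫ z in (0:ℝ)..1, gamF i z * (gF δ z * EF δ z) := by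
  unfold Kc GamHat Gam
  rw [← intervalIntegral.integral_const_mul]
  refine intervalIntegral.integral_congr_ae (Eventually.of_forall fun z hz => ?_)
  rw [uIoc_of_le zero_le_one] at hz
  rw [exp_integral_eq hδ hz.1 hz.2]
  ring

lemma Kc_two {δ : ℝ} (hδ : 0 < δ) : Kc 2 δ = pF δ 1 * (EF δ 0 - 1) := by
  rw [Kc_eq hδ, ← integral_gF_EF hδ]
  simp [gamF]

lemma Kc_one_le {δ : ℝ} (hδ : 0 < δ) : Kc 1 δ ≤ Kc 2 δ := by
  rw [Kc_eq hδ, Kc_eq hδ]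
  refine mul_le_mul_of_nonneg_left ?_ (pF_pos hδ zero_le_one).le
  have hc : Continuous fun z => gF δ z * EF δ z := (gF_continuous hδ).mul (EF_continuous hδ)
  simp only [gamF, if_true, OfNat.ofNat_ne_one, if_false, one_mul]
  refine intervalIntegral.integral_mono_on zero_le_one
    ((continuous_id.mul hc).intervalIntegrable _ _) (hc.intervalIntegrable _ _) fun z hz => ?_
  exact mul_le_of_le_one_left (mul_pos (gF_pos hδ z) (EF_pos δ z)).le hz.2

lemma le_Kc_one {δ : ℝ} (hδ : 0 < δ) :
    pF δ 1 * (1 / 4 * (EF δ (1 / 4) - 1)) ≤ Kc 1 δ := by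
  rw [Kc_eq hδ]
  refine mul_le_mul_of_nonneg_left ?_ (pF_pos hδ zero_le_one).le
  have hc : Continuous fun z => gF δ z * EF δ z := (gF_continuous hδ).mul (EF_continuous hδ)
  have hpos : ∀ z, 0 < gF δ z * EF δ z := fun z => mul_pos (gF_pos hδ z) (EF_pos δ z)
  simp only [gamF, if_true]
  rw [← integral_gF_EF hδ, ← intervalIntegral.integral_const_mul]
  have hi : ∀ a b, IntervalIntegrable (fun z => z * (gF δ z * EF δ z)) volume a b := fun a b =>
    (continuous_id.mul hc).intervalIntegrable _ _
  rw [← intervalIntegral.integral_add_adjacent_intervals (hi 0 (1/4)) (hi (1/4) 1)]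
  have h1 : 0 ≤ ∫ z in (0:ℝ)..(1/4), z * (gF δ z * EF δ z) :=
    intervalIntegral.integral_nonneg (by norm_num) fun z hz => mul_nonneg hz.1 (hpos z).le
  have h2 : ∫ z in (1/4:ℝ)..1, 1 / 4 * (gF δ z * EF δ z)
      ≤ ∫ z in (1/4:ℝ)..1, z * (gF δ z * EF δ z) :=
    intervalIntegral.integral_mono_on (by norm_num)
      ((continuous_const.mul hc).intervalIntegrable _ _) (hi _ _)
      fun z hz => mul_le_mul_of_nonneg_right hz.1 (hpos z).le
  linarith

/-! ### Size of the exponential -/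

/-- Near `1/2`, within distance `√δ / 4`, one has `p_δ ≤ 4δ`. -/
lemma le_EF_quarter {δ : ℝ} (hδ : 0 < δ) (hδ1 : δ ≤ 1) :
    Real.exp (1 / 8 / Real.sqrt δ) ≤ EF δ (1 / 4) := by
  unfold EF
  refine Real.exp_le_exp.2 ?_
  set r := Real.sqrt δ with hr
  have hr0 : 0 < r := Real.sqrt_pos.2 hδ
  have hr2 : r ^ 2 = δ := Real.sq_sqrt hδ.le
  have hr1 : r ≤ 1 := by rw [hr]; exact Real.sqrt_le_one.2 hδ1
  have hc := gF_continuous hδ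
  have h1 : ∫ y in (1/2 - r/4)..(1/2 + r/4), gF δ y ≤ ∫ y in (1/4:ℝ)..1, gF δ y :=
    intervalIntegral.integral_mono_interval (by linarith) (by linarith) (by linarith)
      (Eventually.of_forall fun y => (gF_pos hδ y).le) (hc.intervalIntegrable _ _)
  have h2 : ∫ y in (1/2 - r/4)..(1/2 + r/4), 1 / (4 * δ)
      ≤ ∫ y in (1/2 - r/4)..(1/2 + r/4), gF δ y := by
    refine intervalIntegral.integral_mono_on (by linarith)
      (continuous_const.intervalIntegrable _ _) (hc.intervalIntegrable _ _) fun y hy => ?_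
    have hy0 : 0 ≤ y := by linarith [hy.1]
    rw [gF_eq δ hy0]
    refine one_div_le_one_div_of_le (pF_pos hδ hy0) ?_
    have := pF_upper hδ hy0 (by linarith [hy.2])
    have h3 : (y - 1 / 2) ^ 2 ≤ (r / 4) ^ 2 := sq_le_sq' (by linarith [hy.1]) (by linarith [hy.2])
    nlinarith
  have h3 : ∫ y in (1/2 - r/4)..(1/2 + r/4), 1 / (4 * δ) = 1 / 8 / r := by
    rw [intervalIntegral.integral_const, smul_eq_mul, ← hr2]
    field_simp
    ring
  linarith

/-- On `[0, 1/4]` one has `p_δ ≥ 1/144`, so this interval contributes at most `36` to the integral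
of `1 / p_δ`. -/
lemma EF_zero_le {δ : ℝ} (hδ : 0 < δ) : EF δ 0 ≤ Real.exp 36 * EF δ (1 / 4) := by
  unfold EF
  have hc := gF_continuous hδ
  rw [← intervalIntegral.integral_add_adjacent_intervals
    (hc.intervalIntegrable 0 (1/4)) (hc.intervalIntegrable (1/4) 1), Real.exp_add]
  refine mul_le_mul_of_nonneg_right (Real.exp_le_exp.2 ?_) (Real.exp_pos _).le
  have h : ∫ y in (0:ℝ)..(1/4), gF δ y ≤ ∫ y in (0:ℝ)..(1/4), (144:ℝ) := by
    refine intervalIntegral.integral_mono_on (by norm_num)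
      (hc.intervalIntegrable _ _) (continuous_const.intervalIntegrable _ _) fun y hy => ?_
    have h1 := pF_lower hδ hy.1 (by linarith [hy.2])
    have h2 : 0 ≤ δ * y := mul_nonneg hδ.le hy.1
    rw [gF_eq δ hy.1, div_le_iff₀ (pF_pos hδ hy.1)]
    nlinarith [hy.1, hy.2]
  rw [intervalIntegral.integral_const, smul_eq_mul] at h
  linarith

/-- The lower bound `p_δ ≥ ((z − 1/2)² + δ) / 200` on `[0, 1]` reduces the integral of `1 / p_δ`
to an arctangent. -/
lemma EF_zero_le_exp {δ : ℝ} (hδ : 0 < δ) (hδ1 : δ ≤ 1) :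
    EF δ 0 ≤ Real.exp (800 / Real.sqrt δ) := by
  unfold EF
  refine Real.exp_le_exp.2 ?_
  set r := Real.sqrt δ with hr
  have hr0 : 0 < r := Real.sqrt_pos.2 hδ
  have hr2 : r ^ 2 = δ := Real.sq_sqrt hδ.le
  have hd : ∀ y : ℝ, HasDerivAt (fun y => 200 / r * Real.arctan ((y - 1/2) / r))
      (200 / ((y - 1/2) ^ 2 + δ)) y := fun y => by
    have h := ((((hasDerivAt_id y).sub_const (1/2)).div_const r).arctan).const_mul (200 / r)
    refine h.congr_deriv ?_
    have : (0:ℝ) < (y - 1/2) ^ 2 + δ := by positivity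
    rw [← hr2] at this ⊢
    simp only [id]
    field_simp
    ring
  have hcont : Continuous fun y : ℝ => 200 / ((y - 1/2) ^ 2 + δ) :=
    continuous_const.div (by fun_prop) fun y => by positivity
  have h1 : ∫ y in (0:ℝ)..1, gF δ y ≤ ∫ y in (0:ℝ)..1, 200 / ((y - 1/2) ^ 2 + δ) := by
    refine intervalIntegral.integral_mono_on (by norm_num)
      ((gF_continuous hδ).intervalIntegrable _ _) (hcont.intervalIntegrable _ _) fun y hy => ?_
    have h1 := pF_lower hδ hy.1 hy.2
    have h2 : 0 ≤ δ * y := mul_nonneg hδ.le hy.1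
    have h3 : (0:ℝ) < (y - 1/2) ^ 2 + δ := by positivity
    rw [gF_eq δ hy.1, div_le_div_iff₀ (pF_pos hδ hy.1) h3]
    rcases le_total y (1/4) with h4 | h4
    · nlinarith [hy.1]
    · nlinarith [mul_le_mul_of_nonneg_left h4 hδ.le, sq_nonneg (y - 1/2)]
  rw [intervalIntegral.integral_eq_sub_of_hasDerivAt (fun y _ => hd y)
    (hcont.intervalIntegrable _ _)] at h1
  have hA := Real.arctan_lt_pi_div_two ((1 - 1/2) / r)
  have hB := Real.neg_pi_div_two_lt_arctan ((0 - 1/2) / r)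
  have hpi := Real.pi_le_four
  have h5 : 200 / r * (Real.arctan ((1 - 1/2) / r) - Real.arctan ((0 - 1/2) / r))
      ≤ 200 / r * 4 := mul_le_mul_of_nonneg_left (by linarith) (by positivity)
  have h6 : 200 / r * 4 = 800 / r := by ring
  linarith

/-! ### Exponential bounds and comparability -/

/-- bounds on the constants K_i^δ. -/
theorem stmt11 :
    ∃ c C : ℝ, 0 < c ∧ 0 < C ∧ ∀ δ ∈ Ioc (0:ℝ) 1,
      (∀ i ∈ ({1, 2} : Set ℕ),
        c * Real.exp (c / Real.sqrt δ) ≤ Kc i δ ∧ Kc i δ ≤ C * Real.exp (C / Real.sqrt δ)) ∧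
      c * Kc 2 δ ≤ Kc 1 δ ∧ Kc 1 δ ≤ Kc 2 δ := by
  have he : Real.exp (-36) ≤ 1 := Real.exp_le_one_iff.2 (by norm_num)
  have he0 : 0 < Real.exp (-36) := Real.exp_pos _
  -- `exp (-36)` is the cost of passing from `E(0)` to `E(1/4)`; `1296 = 36 * 36` combines
  -- `p_δ(1) ≥ 1/36` with `(E(1/4) - 1) / 4 ≥ E(1/4) / 36`.
  refine ⟨Real.exp (-36) / 1296, 800, by positivity, by norm_num, fun δ hδ' => ?_⟩
  obtain ⟨hδ, hδ1⟩ := hδ'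
  set c := Real.exp (-36) / 1296 with hcdef
  have hc1 : c ≤ 1 / 1296 := by rw [hcdef]; linarith
  have hr0 : 0 < Real.sqrt δ := Real.sqrt_pos.2 hδ
  have hr1 : Real.sqrt δ ≤ 1 := Real.sqrt_le_one.2 hδ1
  have hp1 : 1 / 36 ≤ pF δ 1 := by
    have := pF_lower hδ zero_le_one le_rfl
    linarith
  have hp2 : pF δ 1 ≤ 13 := by
    have := pF_upper hδ zero_le_one le_rfl
    linarith
  have hq := le_EF_quarter hδ hδ1
  have hq2 : 9 / 8 ≤ EF δ (1 / 4) := by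
    have h1 := Real.add_one_le_exp (1 / 8 / Real.sqrt δ)
    have h2 : (1:ℝ) / 8 ≤ 1 / 8 / Real.sqrt δ := le_div_self (by norm_num) hr0 hr1
    linarith
  have hlow : pF δ 1 * (EF δ (1 / 4) / 36) ≤ Kc 1 δ :=
    (mul_le_mul_of_nonneg_left (by linarith) (by linarith)).trans (le_Kc_one hδ)
  have h12 := Kc_one_le hδ
  have hcl : c * Real.exp (c / Real.sqrt δ) ≤ Kc 1 δ := by
    have h1 : Real.exp (c / Real.sqrt δ) ≤ EF δ (1 / 4) :=
      (Real.exp_le_exp.2 (div_le_div_of_nonneg_right (by linarith) hr0.le)).trans hq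
    have h2 : c * Real.exp (c / Real.sqrt δ) ≤ 1 / 1296 * EF δ (1 / 4) :=
      mul_le_mul hc1 h1 (Real.exp_pos _).le (by norm_num)
    have h3 : 1 / 36 * (EF δ (1 / 4) / 36) ≤ pF δ 1 * (EF δ (1 / 4) / 36) :=
      mul_le_mul_of_nonneg_right hp1 (by linarith)
    linarith
  have hcu : Kc 2 δ ≤ 800 * Real.exp (800 / Real.sqrt δ) := by
    rw [Kc_two hδ]
    have h1 := EF_zero_le_exp hδ hδ1
    have h2 := EF_pos δ 0
    have h3 : pF δ 1 * (EF δ 0 - 1) ≤ pF δ 1 * EF δ 0 :=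
      mul_le_mul_of_nonneg_left (by linarith) (by linarith)
    have h4 : pF δ 1 * EF δ 0 ≤ 800 * Real.exp (800 / Real.sqrt δ) :=
      mul_le_mul (by linarith) h1 h2.le (by norm_num)
    linarith
  refine ⟨?_, ?_, h12⟩
  · rintro i (rfl | rfl)
    · exact ⟨hcl, h12.trans hcu⟩
    · exact ⟨hcl.trans h12, hcu⟩
  · refine le_trans ?_ hlow
    have h0 : Real.exp (-36) * EF δ 0 ≤ EF δ (1 / 4) := by
      have h := mul_le_mul_of_nonneg_left (EF_zero_le hδ) he0.le
      rwa [← mul_assoc, ← Real.exp_add, neg_add_cancel, Real.exp_zero, one_mul] at h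
    have h1 : c * (EF δ 0 - 1) ≤ EF δ (1 / 4) / 36 := by
      have : c * (EF δ 0 - 1) = (Real.exp (-36) * EF δ 0 - Real.exp (-36)) / 1296 := by
        rw [hcdef]; ring
      rw [this]; linarith
    rw [Kc_two hδ]
    calc c * (pF δ 1 * (EF δ 0 - 1)) = pF δ 1 * (c * (EF δ 0 - 1)) := by ring
      _ ≤ _ := mul_le_mul_of_nonneg_left h1 (by linarith)
end

section
/- There exists a constant C > 0 such that for all δ ∈ (0,1], all ξ ∈ [0,1] and i ∈ {1,2}: |Γ̂_i(ξ; δ) − K_i^δ·exp(−∫_ξ^1 a_δ(y)·b_δ(y) dy)| ≤ C. In particular, for every σ ∈ (0,1/2) there are constants C_σ, c_σ > 0 such that for all sufficiently small δ > 0: Γ̂_i(ξ; δ) ≤ C_σ for ξ ∈ [0, 1/2 − σ], and Γ̂_i(ξ; δ) ≥ c_σ·K_i^δ for ξ ∈ [1/2 + σ, 1]. -/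
/-!
Write `D = 1 + z - (λ - δ) z^{1/3}`, so that `a = 1/D` and `b = dD/dz + 1`. Hence `a b` is `a`
plus the derivative of `log D`, and, with `A = ∫₀ a`, `exp (∫_z^ξ a b) = (D(ξ)/D(z)) e^{A(ξ) -
A(z)}` (`integral_ab`). Therefore `Γ̂(ξ) = D(ξ) e^{A(ξ)} ∫₀^ξ w` with `w = (γ/D) e^{-A}`
(`GamHat_eq`), and the difference in the first claim is exactly `-D(ξ) e^{A(ξ)} ∫_ξ^1 w`. As `γ ≤
1` on `[0,1]`, `w` is at most the derivative of `-e^{-A}`, so this is at most `D(ξ) ≤ 2` in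
absolute value (`part_one`).

For the second claim, in the variable `z^{1/3}` the denominator at `δ = 0` is a cubic with a double
root corresponding to `z = 1/2`, so `D ≥ c > 0` off a neighbourhood of `1/2`, uniformly in `δ`
(`exists_lower`). Left of `1/2` this bounds `Γ̂` directly (`tail_le`). Right of `1/2`, it bounds `K`
by a multiple of `Γ̂(ξ)` plus a constant, and the constant is absorbed because `Γ̂(ξ)` itself is
bounded below (`GamHat_ge`, `Kc_le`). In particular every `δ ∈ (0,1]` is admissible there, and no
growth of `K` as `δ → 0` is needed.
-/

open MeasureTheory Set Filter

/-! ### The denominator of `a_δ` -/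

/-- The denominator of `a_δ`. -/
noncomputable def denF (δ z : ℝ) : ℝ := 1 + z - (lamLSW - δ) * z ^ ((1:ℝ)/3)

/-- The primitive `∫₀^x a_δ`. -/
noncomputable def primA (δ x : ℝ) : ℝ := ∫ y in (0:ℝ)..x, aF δ y

/-- The weight `(γ_i / D) e^{-A}` with `D` the denominator and `A` the primitive of `a_δ`. -/
noncomputable def wF (i : ℕ) (δ z : ℝ) : ℝ := gamF i z / denF δ z * Real.exp (-primA δ z)

lemma aF_eq (δ z : ℝ) : aF δ z = 1 / denF δ z := rfl

lemma lamLSW_eq : ∃ s : ℝ, 3 / 4 ≤ s ∧ s ^ 3 = 1 / 2 ∧ lamLSW = 3 * s ^ 2 := by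
  have h3 : ((1/2 : ℝ) ^ ((1:ℝ)/3)) ^ 3 = 1 / 2 := by
    rw [← Real.rpow_natCast, ← Real.rpow_mul (by norm_num)]; norm_num
  have h0 : 0 ≤ (1/2 : ℝ) ^ ((1:ℝ)/3) := by positivity
  refine ⟨(1/2 : ℝ) ^ ((1:ℝ)/3), ?_, h3, ?_⟩
  · by_contra! h
    have := pow_lt_pow_left₀ h h0 (n := 3) (by norm_num)
    rw [h3] at this
    norm_num at this
  · rw [lamLSW, ← Real.rpow_natCast, ← Real.rpow_mul (by norm_num)]; norm_num

lemma lamLSW_ge : 1 ≤ lamLSW := by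
  obtain ⟨s, hs, -, h⟩ := lamLSW_eq
  rw [h]; nlinarith

/-- In the variable `t = z^{1/3}` the cubic `1 + t³ - λ t` has a double root `s`, with `s³ = 1/2`. -/
lemma denF_factor {z : ℝ} (hz : 0 ≤ z) :
    ∃ s t : ℝ, 0 < s ∧ s ^ 3 = 1 / 2 ∧ 0 ≤ t ∧ t ^ 3 = z ∧
      ∀ δ, denF δ z = (t - s) ^ 2 * (t + 2 * s) + δ * t := by
  obtain ⟨s, hs, h3, h⟩ := lamLSW_eq
  have ht : (z ^ ((1:ℝ)/3)) ^ 3 = z := by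
    rw [← Real.rpow_natCast, ← Real.rpow_mul hz]; norm_num
  refine ⟨s, z ^ ((1:ℝ)/3), by linarith, h3, by positivity, ht, fun δ => ?_⟩
  rw [denF, h]
  linear_combination -ht - 2 * h3

lemma denF_pos {δ z : ℝ} (hδ : 0 < δ) (hz : 0 ≤ z) : 0 < denF δ z := by
  obtain ⟨s, t, hs, -, ht, -, h⟩ := denF_factor hz
  rw [h]
  rcases ht.eq_or_lt with rfl | ht
  · simp; positivity
  · positivity

lemma denF_zero_pos {z : ℝ} (hz : 0 ≤ z) (hne : z ≠ 1 / 2) : 0 < denF 0 z := by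
  obtain ⟨s, t, hs, hs3, ht, ht3, h⟩ := denF_factor hz
  rw [h]
  have : t - s ≠ 0 := by
    intro h0
    rw [sub_eq_zero.1 h0, hs3] at ht3
    exact hne ht3.symm
  have : 0 < (t - s) ^ 2 := by positivity
  positivity

lemma denF_mono {δ z : ℝ} (hδ : 0 ≤ δ) (hz : 0 ≤ z) : denF 0 z ≤ denF δ z := by
  have : 0 ≤ δ * z ^ ((1:ℝ)/3) := by positivity
  unfold denF
  linarith

lemma denF_le {δ z : ℝ} (hδ : δ ≤ 1) (hz : z ∈ Icc (0:ℝ) 1) : denF δ z ≤ 2 := by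
  have h0 : 0 ≤ z ^ ((1:ℝ)/3) := Real.rpow_nonneg hz.1 _
  have := lamLSW_ge
  have : 0 ≤ (lamLSW - δ) * z ^ ((1:ℝ)/3) := mul_nonneg (by linarith) h0
  unfold denF
  linarith [hz.2]

lemma denF_cont (δ : ℝ) : Continuous (denF δ) := by
  unfold denF
  have : Continuous fun z : ℝ => z ^ ((1:ℝ)/3) := Real.continuous_rpow_const (by norm_num)
  fun_prop

/-! ### The coefficient `a_δ` and its primitive -/

lemma aF_contOn {δ : ℝ} (hδ : 0 < δ) : ContinuousOn (aF δ) (Ici 0) :=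
  continuousOn_const.div (denF_cont δ).continuousOn fun _ hz => (denF_pos hδ hz).ne'

lemma aF_pos {δ z : ℝ} (hδ : 0 < δ) (hz : 0 ≤ z) : 0 < aF δ z :=
  one_div_pos.2 (denF_pos hδ hz)

lemma aF_int {δ x y : ℝ} (hδ : 0 < δ) (hx : 0 ≤ x) (hy : 0 ≤ y) :
    IntervalIntegrable (aF δ) volume x y :=
  ((aF_contOn hδ).mono fun _ hz => le_trans (le_min hx hy) hz.1).intervalIntegrable

lemma primA_sub {δ x y : ℝ} (hδ : 0 < δ) (hx : 0 ≤ x) (hy : 0 ≤ y) :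
    ∫ t in x..y, aF δ t = primA δ y - primA δ x :=
  (intervalIntegral.integral_interval_sub_left (aF_int hδ le_rfl hy)
    (aF_int hδ le_rfl hx)).symm

lemma primA_mono {δ x y : ℝ} (hδ : 0 < δ) (hx : 0 ≤ x) (hxy : x ≤ y) :
    primA δ x ≤ primA δ y := by
  have := primA_sub hδ hx (hx.trans hxy)
  have h : 0 ≤ ∫ t in x..y, aF δ t :=
    intervalIntegral.integral_nonneg hxy fun t ht => (aF_pos hδ (hx.trans ht.1)).le
  linarith

lemma primA_contOn {δ : ℝ} (hδ : 0 < δ) : ContinuousOn (primA δ) (Icc 0 1) :=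
  uIcc_of_le (zero_le_one' ℝ) ▸
    intervalIntegral.continuousOn_primitive_interval' (aF_int hδ le_rfl zero_le_one) (by simp)

lemma primA_deriv {δ x : ℝ} (hδ : 0 < δ) (hx : 0 < x) : HasDerivAt (primA δ) (aF δ x) x :=
  intervalIntegral.integral_hasDerivAt_right (aF_int hδ le_rfl hx.le)
    (((aF_contOn hδ).mono Ioi_subset_Ici_self).stronglyMeasurableAtFilter isOpen_Ioi x hx)
    ((aF_contOn hδ).continuousAt (Ici_mem_nhds hx))

lemma denF_deriv {δ x : ℝ} (hx : 0 < x) : HasDerivAt (denF δ) (bF δ x - 1) x := by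
  have h := ((hasDerivAt_id x).const_add 1).sub
    ((Real.hasDerivAt_rpow_const (p := (1:ℝ)/3) (Or.inl hx.ne')).const_mul (lamLSW - δ))
  refine h.congr_deriv ?_
  have : (1:ℝ)/3 - 1 = -2/3 := by norm_num
  rw [this, bF]
  ring

/-- As `a = 1 / D` and `b = dD/dz + 1`, the product `a b` is the derivative of `log D + A`. -/
lemma integral_ab {δ x y : ℝ} (hδ : 0 < δ) (hx : 0 ≤ x) (hxy : x ≤ y) (hy : y ≤ 1) :
    Real.exp (∫ t in x..y, aF δ t * bF δ t) =
      denF δ y / denF δ x * Real.exp (primA δ y - primA δ x) := by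
  have hDy := denF_pos hδ (hx.trans hxy)
  have hDx := denF_pos hδ hx
  have hsub : Icc x y ⊆ Icc 0 1 := Icc_subset_Icc hx hy
  have hint : IntervalIntegrable (fun t => aF δ t * bF δ t) volume x y := by
    have hb : IntervalIntegrable (bF δ) volume x y := by
      unfold bF
      exact intervalIntegrable_const.sub
        ((intervalIntegral.intervalIntegrable_rpow' (by norm_num)).const_mul _)
    exact hb.continuousOn_mul
      ((aF_contOn hδ).mono fun _ hz => by
        rw [uIcc_of_le hxy] at hz; exact hx.trans hz.1)
  have key := intervalIntegral.integral_eq_sub_of_hasDerivAt_of_le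
    (f := fun t => Real.log (denF δ t) + primA δ t) hxy
    (((denF_cont δ).continuousOn.log fun t ht => (denF_pos hδ (hx.trans ht.1)).ne').add
      ((primA_contOn hδ).mono hsub))
    (fun t ht => by
      have ht0 : 0 < t := hx.trans_lt ht.1
      have hD := denF_pos hδ ht0.le
      refine (((denF_deriv ht0).log hD.ne').add (primA_deriv hδ ht0)).congr_deriv ?_
      rw [aF_eq]
      field_simp
      ring) hint
  rw [key, show ∀ a b c d : ℝ, a + b - (c + d) = (a - c) + (b - d) by intros; ring,
    Real.exp_add, Real.exp_sub, Real.exp_log hDy, Real.exp_log hDx]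

/-! ### The weight and the explicit form of the solution -/

lemma gamF_bounds {i : ℕ} {z : ℝ} (hz : z ∈ Icc (0:ℝ) 1) : z ≤ gamF i z ∧ gamF i z ≤ 1 := by
  unfold gamF
  split_ifs
  · exact ⟨le_rfl, hz.2⟩
  · exact ⟨hz.2, le_rfl⟩

lemma gamF_cont (i : ℕ) : Continuous (gamF i) := by
  unfold gamF
  split_ifs <;> fun_prop

lemma wF_contOn (i : ℕ) {δ : ℝ} (hδ : 0 < δ) : ContinuousOn (wF i δ) (Icc 0 1) :=
  ((gamF_cont i).continuousOn.div (denF_cont δ).continuousOn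
    fun _ hz => (denF_pos hδ hz.1).ne').mul (primA_contOn hδ).neg.rexp

lemma wF_int (i : ℕ) {δ x y : ℝ} (hδ : 0 < δ) (hx : 0 ≤ x) (hxy : x ≤ y) (hy : y ≤ 1) :
    IntervalIntegrable (wF i δ) volume x y :=
  ((wF_contOn i hδ).mono (Icc_subset_Icc hx hy)).intervalIntegrable_of_Icc hxy

lemma GamHat_eq (i : ℕ) {δ ξ : ℝ} (hδ : 0 < δ) (hξ : ξ ∈ Icc (0:ℝ) 1) :
    GamHat i δ ξ = denF δ ξ * Real.exp (primA δ ξ) * ∫ z in (0:ℝ)..ξ, wF i δ z := by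
  rw [GamHat, Gam, ← intervalIntegral.integral_const_mul]
  refine intervalIntegral.integral_congr fun z hz => ?_
  rw [uIcc_of_le hξ.1] at hz
  simp only [zero_mul, sub_zero]
  rw [integral_ab hδ hz.1 hz.2 hξ.2, wF, sub_eq_add_neg, Real.exp_add]
  ring

/-- The weight `w` is at most `a e^{-A}`, the derivative of `-e^{-A}`. -/
lemma integral_wF_le (i : ℕ) {δ x y : ℝ} (hδ : 0 < δ) (hx : 0 ≤ x) (hxy : x ≤ y)
    (hy : y ≤ 1) :
    ∫ z in x..y, wF i δ z ≤ Real.exp (-primA δ x) := by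
  have hsub : Icc x y ⊆ Icc 0 1 := Icc_subset_Icc hx hy
  have hc : ContinuousOn (fun z => aF δ z * Real.exp (-primA δ z)) (Icc x y) :=
    ((aF_contOn hδ).mono fun _ hz => hx.trans hz.1).mul ((primA_contOn hδ).mono hsub).neg.rexp
  have key := intervalIntegral.integral_eq_sub_of_hasDerivAt_of_le
    (f := fun t => -Real.exp (-primA δ t)) hxy
    ((primA_contOn hδ).mono hsub).neg.rexp.neg
    (fun t ht => by
      refine (primA_deriv hδ (hx.trans_lt ht.1)).neg.exp.neg.congr_deriv ?_
      rw [Pi.neg_apply]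
      ring) (hc.intervalIntegrable_of_Icc hxy)
  have hle : ∫ z in x..y, wF i δ z ≤ ∫ z in x..y, aF δ z * Real.exp (-primA δ z) := by
    refine intervalIntegral.integral_mono_on hxy (wF_int i hδ hx hxy hy)
      (hc.intervalIntegrable_of_Icc hxy) fun z hz => ?_
    have hD := denF_pos hδ (hx.trans hz.1)
    rw [wF, aF_eq]
    have := (gamF_bounds (i := i) (hsub hz)).2
    gcongr
  have := Real.exp_pos (-primA δ y)
  linarith

lemma wF_nonneg (i : ℕ) {δ z : ℝ} (hδ : 0 < δ) (hz : z ∈ Icc (0:ℝ) 1) : 0 ≤ wF i δ z := by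
  have hD := denF_pos hδ hz.1
  have := hz.1.trans (gamF_bounds (i := i) hz).1
  unfold wF
  positivity

lemma integral_wF_nonneg (i : ℕ) {δ x y : ℝ} (hδ : 0 < δ) (hx : 0 ≤ x) (hxy : x ≤ y)
    (hy : y ≤ 1) : 0 ≤ ∫ z in x..y, wF i δ z :=
  intervalIntegral.integral_nonneg hxy fun _ hz =>
    wF_nonneg i hδ (Icc_subset_Icc hx hy hz)

lemma integral_wF_add (i : ℕ) {δ ξ : ℝ} (hδ : 0 < δ) (hξ : ξ ∈ Icc (0:ℝ) 1) :
    (∫ z in (0:ℝ)..ξ, wF i δ z) + ∫ z in ξ..(1:ℝ), wF i δ z = ∫ z in (0:ℝ)..1, wF i δ z :=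
  intervalIntegral.integral_add_adjacent_intervals (wF_int i hδ le_rfl hξ.1 hξ.2)
    (wF_int i hδ hξ.1 hξ.2 le_rfl)

/-! ### The uniform approximation -/

lemma part_one (i : ℕ) {δ ξ : ℝ} (hδ : δ ∈ Ioc (0:ℝ) 1) (hξ : ξ ∈ Icc (0:ℝ) 1) :
    |GamHat i δ ξ - Kc i δ * Real.exp (-∫ y in ξ..(1:ℝ), aF δ y * bF δ y)| ≤ 2 := by
  have hD := denF_pos hδ.1 hξ.1
  have hD1 := denF_pos hδ.1 zero_le_one
  have hI := integral_wF_nonneg i hδ.1 hξ.1 hξ.2 le_rfl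
  have hsum := integral_wF_add i hδ.1 hξ
  have heq : GamHat i δ ξ - Kc i δ * Real.exp (-∫ y in ξ..(1:ℝ), aF δ y * bF δ y) =
      -(denF δ ξ * (Real.exp (primA δ ξ) * ∫ z in ξ..(1:ℝ), wF i δ z)) := by
    rw [Real.exp_neg, integral_ab hδ.1 hξ.1 hξ.2 le_rfl, Kc, GamHat_eq i hδ.1 hξ,
      GamHat_eq i hδ.1 ⟨zero_le_one, le_rfl⟩, ← hsum, Real.exp_sub]
    field_simp
    ring
  rw [heq, abs_neg, abs_of_nonneg (by positivity)]
  have h1 : Real.exp (primA δ ξ) * ∫ z in ξ..(1:ℝ), wF i δ z ≤ 1 := by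
    calc _ ≤ Real.exp (primA δ ξ) * Real.exp (-primA δ ξ) := by
          gcongr; exact integral_wF_le i hδ.1 hξ.1 hξ.2 le_rfl
      _ = 1 := by rw [← Real.exp_add]; simp
  calc _ ≤ denF δ ξ * 1 := by gcongr
    _ ≤ 2 := by rw [mul_one]; exact denF_le hδ.2 hξ

/-! ### Bounds away from the critical point -/

/-- Away from the double root `z = 1/2`, the denominator is bounded below uniformly in `δ`. -/
lemma exists_lower {σ : ℝ} (hσ : σ ∈ Ioo (0:ℝ) (1/2)) :
    ∃ c : ℝ, 0 < c ∧ ∀ δ, 0 < δ → ∀ z ∈ Icc (0:ℝ) (1/2 - σ) ∪ Icc (1/2 + σ) 1,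
      c ≤ denF δ z := by
  obtain ⟨z₀, hz₀, hmin⟩ := (isCompact_Icc.union isCompact_Icc).exists_isMinOn
    (s := Icc (0:ℝ) (1/2 - σ) ∪ Icc (1/2 + σ) 1)
    ⟨0, Or.inl ⟨le_rfl, by linarith [hσ.2]⟩⟩ (denF_cont 0).continuousOn
  have hnn : ∀ z ∈ Icc (0:ℝ) (1/2 - σ) ∪ Icc (1/2 + σ) 1, 0 ≤ z := by
    rintro z (hz | hz)
    · exact hz.1
    · linarith [hz.1, hσ.1]
  refine ⟨denF 0 z₀, denF_zero_pos (hnn _ hz₀) ?_, fun δ hδ z hz =>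
    (hmin hz).trans (denF_mono hδ.le (hnn z hz))⟩
  rcases hz₀ with hz | hz
  · exact ne_of_lt (by linarith [hz.2, hσ.1])
  · exact ne_of_gt (by linarith [hz.1, hσ.1])

lemma primA_sub_le {δ c x y : ℝ} (hδ : 0 < δ) (hc : 0 < c) (hx : 0 ≤ x) (hxy : x ≤ y)
    (hy : y ≤ 1) (hD : ∀ z ∈ Icc x y, c ≤ denF δ z) : primA δ y - primA δ x ≤ 1 / c := by
  rw [← primA_sub hδ hx (hx.trans hxy)]
  calc _ ≤ ∫ _ in x..y, 1 / c := by
        refine intervalIntegral.integral_mono_on hxy (aF_int hδ hx (hx.trans hxy))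
          intervalIntegrable_const fun z hz => ?_
        rw [aF_eq]
        exact one_div_le_one_div_of_le hc (hD z hz)
    _ = (y - x) * (1 / c) := by simp
    _ ≤ 1 * (1 / c) := by gcongr; linarith
    _ = 1 / c := one_mul _

/-- A bound on `Γ̂(y) - Γ̂(x) exp(∫ₓ^y a b) = ∫ₓ^y γ(z) exp(∫_z^y a b) dz` where `D ≥ c`. -/
lemma tail_le (i : ℕ) {δ c x y : ℝ} (hδ : δ ∈ Ioc (0:ℝ) 1) (hc : 0 < c) (hx : 0 ≤ x)
    (hxy : x ≤ y) (hy : y ≤ 1) (hD : ∀ z ∈ Icc x y, c ≤ denF δ z) :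
    denF δ y * Real.exp (primA δ y) * ∫ z in x..y, wF i δ z ≤ 2 * Real.exp (1 / c) := by
  have h0 := denF_pos hδ.1 (hx.trans hxy)
  have h2 := denF_le hδ.2 ⟨hx.trans hxy, hy⟩
  calc _ ≤ denF δ y * Real.exp (primA δ y) * Real.exp (-primA δ x) := by
        gcongr; exact integral_wF_le i hδ.1 hx hxy hy
    _ = denF δ y * Real.exp (primA δ y - primA δ x) := by
        rw [mul_assoc, ← Real.exp_add, sub_eq_add_neg]
    _ ≤ 2 * Real.exp (1 / c) := by
        gcongr
        exact primA_sub_le hδ.1 hc hx hxy hy hD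

lemma GamHat_ge (i : ℕ) {δ ξ : ℝ} (hδ : δ ∈ Ioc (0:ℝ) 1) (hξ : ξ ∈ Icc (0:ℝ) 1) :
    denF δ ξ * (ξ ^ 2 / 4) ≤ GamHat i δ ξ := by
  have hD := denF_pos hδ.1 hξ.1
  have key : Real.exp (-primA δ ξ) * (ξ ^ 2 / 4) ≤ ∫ z in (0:ℝ)..ξ, wF i δ z := by
    have : ∫ z in (0:ℝ)..ξ, Real.exp (-primA δ ξ) / 2 * z =
        Real.exp (-primA δ ξ) * (ξ ^ 2 / 4) := by
      rw [intervalIntegral.integral_const_mul, integral_id]; ring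
    rw [← this]
    refine intervalIntegral.integral_mono_on hξ.1
      (Continuous.intervalIntegrable (by fun_prop) _ _) (wF_int i hδ.1 le_rfl hξ.1 hξ.2)
      fun z hz => ?_
    have hz1 : z ∈ Icc (0:ℝ) 1 := ⟨hz.1, hz.2.trans hξ.2⟩
    have hg := (gamF_bounds (i := i) hz1).1
    have hDz := denF_pos hδ.1 hz.1
    have hDz2 := denF_le hδ.2 hz1
    have hA := primA_mono hδ.1 hz.1 hz.2
    have hz0 := hz.1
    calc Real.exp (-primA δ ξ) / 2 * z = z / 2 * Real.exp (-primA δ ξ) := by ring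
      _ ≤ gamF i z / denF δ z * Real.exp (-primA δ z) := by
        have hg0 := hz0.trans hg
        gcongr
  rw [GamHat_eq i hδ.1 hξ]
  calc _ = denF δ ξ * Real.exp (primA δ ξ) * (Real.exp (-primA δ ξ) * (ξ ^ 2 / 4)) := by
        rw [Real.exp_neg]; field_simp
    _ ≤ _ := by gcongr

/-- With `Q = e^{1/c}`, the two summands of `K = Γ̂(ξ) exp(∫_ξ^1 a b) + ∫_ξ^1 γ(z) exp(∫_z^1 a b) dz`
are at most `(2Q/c) Γ̂(ξ)` and `2Q`, and the constant is absorbed since `Γ̂(ξ) ≥ c/16`. -/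
lemma Kc_le (i : ℕ) {δ c ξ : ℝ} (hδ : δ ∈ Ioc (0:ℝ) 1) (hc : 0 < c)
    (hξ : ξ ∈ Icc (1/2:ℝ) 1) (hD : ∀ z ∈ Icc ξ 1, c ≤ denF δ z) :
    Kc i δ ≤ Real.exp (1 / c) * (34 / c) * GamHat i δ ξ := by
  have hξ' : ξ ∈ Icc (0:ℝ) 1 := ⟨by linarith [hξ.1], hξ.2⟩
  have hcD := hD ξ ⟨le_rfl, hξ.2⟩
  have hDξ := denF_pos hδ.1 hξ'.1
  have hD1 := denF_pos hδ.1 zero_le_one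
  have hD2 : denF δ 1 ≤ 2 := denF_le hδ.2 ⟨zero_le_one, le_rfl⟩
  have htail := tail_le i hδ hc hξ'.1 hξ.2 le_rfl hD
  have hG : c / 16 ≤ GamHat i δ ξ := by
    refine le_trans ?_ (GamHat_ge i hδ hξ')
    calc c / 16 = c * ((1/2) ^ 2 / 4) := by ring
      _ ≤ denF δ ξ * (ξ ^ 2 / 4) := by gcongr; exact hξ.1
  have hG0 : 0 ≤ GamHat i δ ξ := le_trans (by positivity) hG
  have hK : Kc i δ = denF δ 1 / denF δ ξ * Real.exp (primA δ 1 - primA δ ξ) * GamHat i δ ξ +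
      denF δ 1 * Real.exp (primA δ 1) * ∫ z in ξ..(1:ℝ), wF i δ z := by
    rw [Kc, GamHat_eq i hδ.1 hξ', GamHat_eq i hδ.1 ⟨zero_le_one, le_rfl⟩,
      ← integral_wF_add i hδ.1 hξ', Real.exp_sub]
    field_simp
  have hA := primA_sub_le hδ.1 hc hξ'.1 hξ.2 le_rfl hD
  have h1 : denF δ 1 / denF δ ξ * Real.exp (primA δ 1 - primA δ ξ) * GamHat i δ ξ ≤
      2 / c * Real.exp (1 / c) * GamHat i δ ξ := by gcongr
  have h2 : 2 * Real.exp (1 / c) ≤ 2 * Real.exp (1 / c) * (16 / c * GamHat i δ ξ) := by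
    refine le_mul_of_one_le_right (by positivity) ?_
    calc (1:ℝ) = 16 / c * (c / 16) := by field_simp
      _ ≤ _ := by gcongr
  calc _ ≤ 2 / c * Real.exp (1 / c) * GamHat i δ ξ +
        2 * Real.exp (1 / c) * (16 / c * GamHat i δ ξ) := by linarith
    _ = _ := by ring

/-- approximation of Γ̂_i on [0,1]. -/
theorem stmt13 :
    (∃ C : ℝ, 0 < C ∧ ∀ δ ∈ Ioc (0:ℝ) 1, ∀ ξ ∈ Icc (0:ℝ) 1, ∀ i ∈ ({1, 2} : Set ℕ),
      |GamHat i δ ξ - Kc i δ * Real.exp (-∫ y in ξ..(1:ℝ), aF δ y * bF δ y)| ≤ C) ∧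
    (∀ σ ∈ Ioo (0:ℝ) (1/2), ∃ Cσ cσ δ₀ : ℝ, 0 < Cσ ∧ 0 < cσ ∧ 0 < δ₀ ∧
      ∀ δ ∈ Ioc (0:ℝ) δ₀, ∀ i ∈ ({1, 2} : Set ℕ),
        (∀ ξ ∈ Icc (0:ℝ) (1/2 - σ), GamHat i δ ξ ≤ Cσ) ∧
        (∀ ξ ∈ Icc (1/2 + σ) 1, cσ * Kc i δ ≤ GamHat i δ ξ)) := by
  refine ⟨⟨2, by norm_num, fun δ hδ ξ hξ i _ => part_one i hδ hξ⟩, fun σ hσ => ?_⟩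
  obtain ⟨c, hc, hD⟩ := exists_lower hσ
  refine ⟨2 * Real.exp (1 / c), (Real.exp (1 / c) * (34 / c))⁻¹, 1, by positivity,
    by positivity, one_pos, fun δ hδ i _ => ⟨fun ξ hξ => ?_, fun ξ hξ => ?_⟩⟩
  · have hξ1 : ξ ≤ 1 := by linarith [hξ.2, hσ.1]
    rw [GamHat_eq i hδ.1 ⟨hξ.1, hξ1⟩]
    exact tail_le i hδ hc le_rfl hξ.1 hξ1 fun z hz =>
      hD δ hδ.1 z (Or.inl ⟨hz.1, hz.2.trans hξ.2⟩)
  · rw [inv_mul_le_iff₀ (by positivity)]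
    exact Kc_le i hδ hc ⟨by linarith [hξ.1, hσ.1], hξ.2⟩ fun z hz =>
      hD δ hδ.1 z (Or.inr ⟨hξ.1.trans hz.1, hz.2⟩)
end
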